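/- There exists an absolute constant C > 0 such that for all real α, β with α ≥ β ≥ (1+√2)/4, all integers n ≥ 6 and all x ∈ [−1,1], ((1−x)/2)^{α/2+1/4} ((1+x)/2)^{β/2+1/4} |P_n^{(α,β)}(x)| ≤ C α^{1/6} (1 + α/n)^{1/12} ( Γ(n+α+1) Γ(n+β+1) / ( (2n+α+β+1) Γ(n+1) Γ(n+α+β+1) ) )^{1/2}, where Γ is the Gamma function. -/

import Mathlib

/-- Generalized binomial coefficient `C(t, j) = t(t-1)⋯(t-j+1)/j!`. -/
noncomputable def genChoose (t : ℝ) (j : ℕ) : ℝ :=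
  (∏ i ∈ Finset.range j, (t - (i : ℝ))) / (Nat.factorial j : ℝ)

/-- Jacobi polynomial
`P_n^{(α,β)}(x) = ∑_{s=0}^n C(n+α, n-s) C(n+β, s) ((x-1)/2)^s ((x+1)/2)^{n-s}`. -/
noncomputable def jacobi (α β : ℝ) (n : ℕ) (x : ℝ) : ℝ :=
  ∑ s ∈ Finset.range (n + 1),
    genChoose ((n : ℝ) + α) (n - s) * genChoose ((n : ℝ) + β) s *
      ((x - 1) / 2) ^ s * ((x + 1) / 2) ^ (n - s)

/-- The Jacobi polynomial transplanted to the unit interval, in the variable `t = (1 - x) / 2`. -/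
noncomputable def unitJacobi (a b : ℝ) (n : ℕ) (t : ℝ) : ℝ :=
  ∑ s ∈ Finset.range (n + 1),
    genChoose ((n : ℝ) + a) (n - s) * genChoose ((n : ℝ) + b) s * ((-t) ^ s * (1 - t) ^ (n - s))

theorem jacobi_eq_unitJacobi (a b : ℝ) (n : ℕ) (x : ℝ) :
    jacobi a b n x = unitJacobi a b n ((1 - x) / 2) := by
  unfold jacobi unitJacobi
  refine Finset.sum_congr rfl fun s _ => ?_
  rw [show (x - 1) / 2 = -((1 - x) / 2) by ring, show (x + 1) / 2 = 1 - (1 - x) / 2 by ring]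
  ring

theorem genChoose_succ (t : ℝ) (j : ℕ) :
    ((j : ℝ) + 1) * genChoose t (j + 1) = (t - j) * genChoose t j := by
  unfold genChoose
  rw [Finset.prod_range_succ, Nat.factorial_succ]
  have : (Nat.factorial j : ℝ) ≠ 0 := by positivity
  have : (j : ℝ) + 1 ≠ 0 := by positivity
  push_cast
  field_simp

theorem continuous_unitJacobi (a b : ℝ) (n : ℕ) : Continuous (unitJacobi a b n) := by
  unfold unitJacobi
  fun_prop

theorem hasDerivAt_neg_pow_mul_one_sub_pow (s m : ℕ) (t : ℝ) :
    HasDerivAt (fun t : ℝ => (-t) ^ s * (1 - t) ^ m)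
      (-(s : ℝ) * (-t) ^ (s - 1) * (1 - t) ^ m - (m : ℝ) * (-t) ^ s * (1 - t) ^ (m - 1)) t := by
  have h1 := (hasDerivAt_neg t).pow s
  have h2 := ((hasDerivAt_id t).const_sub 1).pow m
  refine (h1.mul h2).congr_deriv ?_
  simp
  ring

theorem hasDerivAt_unitJacobi_succ (a b : ℝ) (n : ℕ) (t : ℝ) :
    HasDerivAt (unitJacobi a b (n + 1))
      (-((n : ℝ) + a + b + 2) * unitJacobi (a + 1) (b + 1) n t) t := by
  have h : HasDerivAt (unitJacobi a b (n + 1)) (∑ s ∈ Finset.range (n + 1 + 1),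
      genChoose (((n + 1 : ℕ) : ℝ) + a) (n + 1 - s) * genChoose (((n + 1 : ℕ) : ℝ) + b) s *
      (-(s : ℝ) * (-t) ^ (s - 1) * (1 - t) ^ (n + 1 - s)
        - ((n + 1 - s : ℕ) : ℝ) * (-t) ^ s * (1 - t) ^ (n + 1 - s - 1))) t := by
    unfold unitJacobi
    exact HasDerivAt.fun_sum fun s _ => (hasDerivAt_neg_pow_mul_one_sub_pow s _ t).const_mul _
  refine h.congr_deriv ?_
  simp only [mul_sub, Finset.sum_sub_distrib]
  rw [Finset.sum_range_succ' _ (n + 1), Finset.sum_range_succ _ (n + 1)]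
  simp only [Nat.sub_self, Nat.cast_zero, neg_zero, zero_mul, mul_zero, add_zero]
  rw [← Finset.sum_sub_distrib, unitJacobi, Finset.mul_sum]
  refine Finset.sum_congr rfl fun s hs => ?_
  have hs' : s ≤ n := by simpa [Nat.lt_succ_iff] using hs
  obtain ⟨m, rfl⟩ := Nat.exists_eq_add_of_le hs'
  rw [show s + m + 1 - (s + 1) = m by lia, show s + m + 1 - s = m + 1 by lia,
    show s + m - s = m by lia, Nat.add_sub_cancel, Nat.add_sub_cancel,
    show ((s + m : ℕ) : ℝ) + (a + 1) = ((s + m + 1 : ℕ) : ℝ) + a by push_cast; ring,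
    show ((s + m : ℕ) : ℝ) + (b + 1) = ((s + m + 1 : ℕ) : ℝ) + b by push_cast; ring]
  have e1 := genChoose_succ (((s + m + 1 : ℕ) : ℝ) + a) m
  have e2 := genChoose_succ (((s + m + 1 : ℕ) : ℝ) + b) s
  push_cast at e1 e2 ⊢
  linear_combination (-genChoose ((s : ℝ) + m + 1 + a) m * (-t) ^ s * (1 - t) ^ m) * e2
    - genChoose ((s : ℝ) + m + 1 + b) s * (-t) ^ s * (1 - t) ^ m * e1

theorem differentiable_unitJacobi (a b : ℝ) (n : ℕ) : Differentiable ℝ (unitJacobi a b n) := by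
  unfold unitJacobi
  fun_prop

theorem deriv_unitJacobi_raise (a b : ℝ) (n : ℕ) (t : ℝ) :
    t * (1 - t) * deriv (unitJacobi (a + 1) (b + 1) n) t
      + ((a + 1) * (1 - t) - (b + 1) * t) * unitJacobi (a + 1) (b + 1) n t
      = ((n : ℝ) + 1) * unitJacobi a b (n + 1) t := by
  have h : HasDerivAt (unitJacobi (a + 1) (b + 1) n) (∑ s ∈ Finset.range (n + 1),
      genChoose ((n : ℝ) + (a + 1)) (n - s) * genChoose ((n : ℝ) + (b + 1)) s *
      (-(s : ℝ) * (-t) ^ (s - 1) * (1 - t) ^ (n - s)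
        - ((n - s : ℕ) : ℝ) * (-t) ^ s * (1 - t) ^ (n - s - 1))) t := by
    unfold unitJacobi
    exact HasDerivAt.fun_sum fun s _ => (hasDerivAt_neg_pow_mul_one_sub_pow s _ t).const_mul _
  have e : ((n : ℝ) + 1) * unitJacobi a b (n + 1) t =
      ∑ s ∈ Finset.range (n + 1 + 1), ((n + 1 - s : ℕ) : ℝ) *
        (genChoose (((n + 1 : ℕ) : ℝ) + a) (n + 1 - s) * genChoose (((n + 1 : ℕ) : ℝ) + b) s *
          ((-t) ^ s * (1 - t) ^ (n + 1 - s))) +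
      ∑ s ∈ Finset.range (n + 1 + 1), (s : ℝ) *
        (genChoose (((n + 1 : ℕ) : ℝ) + a) (n + 1 - s) * genChoose (((n + 1 : ℕ) : ℝ) + b) s *
          ((-t) ^ s * (1 - t) ^ (n + 1 - s))) := by
    rw [← Finset.sum_add_distrib, unitJacobi, Finset.mul_sum]
    refine Finset.sum_congr rfl fun s hs => ?_
    have hs' : s ≤ n + 1 := by simpa [Nat.lt_succ_iff] using hs
    rw [Nat.cast_sub hs']
    push_cast
    ring
  rw [h.deriv, e, Finset.sum_range_succ _ (n + 1), Finset.sum_range_succ' _ (n + 1)]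
  simp only [Nat.sub_self, Nat.cast_zero, zero_mul, add_zero]
  rw [← Finset.sum_add_distrib, unitJacobi, Finset.mul_sum, Finset.mul_sum,
    ← Finset.sum_add_distrib]
  refine Finset.sum_congr rfl fun s hs => ?_
  have hs' : s ≤ n := by simpa [Nat.lt_succ_iff] using hs
  obtain ⟨m, rfl⟩ := Nat.exists_eq_add_of_le hs'
  rw [show s + m + 1 - (s + 1) = m by lia, show s + m + 1 - s = m + 1 by lia,
    show s + m - s = m by lia,
    show ((s + m : ℕ) : ℝ) + (a + 1) = ((s + m + 1 : ℕ) : ℝ) + a by push_cast; ring,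
    show ((s + m : ℕ) : ℝ) + (b + 1) = ((s + m + 1 : ℕ) : ℝ) + b by push_cast; ring]
  have e1 := genChoose_succ (((s + m + 1 : ℕ) : ℝ) + a) m
  have e2 := genChoose_succ (((s + m + 1 : ℕ) : ℝ) + b) s
  have p1 : t * ((s : ℝ) * (-t) ^ (s - 1)) = -((s : ℝ) * (-t) ^ s) := by
    cases s with
    | zero => simp
    | succ k => simp only [Nat.add_sub_cancel]; ring
  have p2 : (1 - t) * ((m : ℝ) * (1 - t) ^ (m - 1)) = (m : ℝ) * (1 - t) ^ m := by
    cases m with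
    | zero => simp
    | succ k => simp only [Nat.add_sub_cancel]; ring
  push_cast at e1 e2 ⊢
  set X := genChoose ((s : ℝ) + m + 1 + a) m
  set Y := genChoose ((s : ℝ) + m + 1 + b) s
  linear_combination (-X * Y * (1 - t) ^ (m + 1)) * p1 - (X * Y * t * (-t) ^ s) * p2
    - (Y * (-t) ^ s * (1 - t) ^ (m + 1)) * e1 - (X * (-t) ^ (s + 1) * (1 - t) ^ m) * e2

open Real in
/-- The squared norm of the Jacobi polynomial with respect to `t ^ a * (1 - t) ^ b` on `[0, 1]`. -/
noncomputable def unitJacobiNormSq (a b : ℝ) (n : ℕ) : ℝ :=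
  Gamma ((n : ℝ) + a + 1) * Gamma ((n : ℝ) + b + 1) /
    ((2 * (n : ℝ) + a + b + 1) * Gamma ((n : ℝ) + 1) * Gamma ((n : ℝ) + a + b + 1))

theorem unitJacobiNormSq_pos {a b : ℝ} (ha : 0 < a) (hb : 0 < b) (n : ℕ) :
    0 < unitJacobiNormSq a b n := by
  unfold unitJacobiNormSq
  have := Real.Gamma_pos_of_pos (show 0 < (n : ℝ) + a + 1 by positivity)
  have := Real.Gamma_pos_of_pos (show 0 < (n : ℝ) + b + 1 by positivity)
  have := Real.Gamma_pos_of_pos (show 0 < (n : ℝ) + 1 by positivity)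
  have := Real.Gamma_pos_of_pos (show 0 < (n : ℝ) + a + b + 1 by positivity)
  positivity

theorem unitJacobiNormSq_zero {a b : ℝ} (ha : 0 < a) (hb : 0 < b) :
    unitJacobiNormSq a b 0 = ProbabilityTheory.beta (a + 1) (b + 1) := by
  unfold unitJacobiNormSq ProbabilityTheory.beta
  have h := Real.Gamma_add_one (show a + b + 1 ≠ 0 by positivity)
  rw [show a + 1 + (b + 1) = a + b + 1 + 1 by ring, h]
  simp

theorem unitJacobiNormSq_succ {a b : ℝ} (ha : 0 < a) (hb : 0 < b) (n : ℕ) :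
    ((n : ℝ) + 1) * unitJacobiNormSq a b (n + 1) =
      ((n : ℝ) + a + b + 2) * unitJacobiNormSq (a + 1) (b + 1) n := by
  unfold unitJacobiNormSq
  have h1 := Real.Gamma_add_one (show (n : ℝ) + 1 ≠ 0 by positivity)
  have h2 := Real.Gamma_add_one (show (n : ℝ) + a + b + 2 ≠ 0 by positivity)
  have g1 := Real.Gamma_pos_of_pos (show 0 < (n : ℝ) + 1 by positivity)
  have g2 := Real.Gamma_pos_of_pos (show 0 < (n : ℝ) + a + b + 2 by positivity)
  push_cast
  rw [show (n : ℝ) + 1 + a + 1 = n + a + 2 by ring, show (n : ℝ) + 1 + b + 1 = n + b + 2 by ring,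
    show (n : ℝ) + (a + 1) + 1 = n + a + 2 by ring,
    show (n : ℝ) + (b + 1) + 1 = n + b + 2 by ring,
    show (n : ℝ) + 1 + a + b + 1 = n + a + b + 2 by ring,
    show (n : ℝ) + (a + 1) + (b + 1) + 1 = n + a + b + 2 + 1 by ring, h1, h2,
    show 2 * ((n : ℝ) + 1) + a + b + 1 = 2 * n + a + b + 3 by ring,
    show 2 * (n : ℝ) + (a + 1) + (b + 1) + 1 = 2 * n + a + b + 3 by ring]
  field_simp

theorem integral_rpow_mul_one_sub_rpow {a b : ℝ} (ha : 0 < a) (hb : 0 < b) :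
    ∫ t in (0 : ℝ)..1, t ^ a * (1 - t) ^ b = ProbabilityTheory.beta (a + 1) (b + 1) := by
  rw [ProbabilityTheory.beta_eq_betaIntegralReal _ _ (by linarith) (by linarith),
    Complex.betaIntegral]
  have : ∀ t ∈ Set.uIcc (0 : ℝ) 1,
      ((t : ℂ) ^ (((a + 1 : ℝ) : ℂ) - 1) * (1 - (t : ℂ)) ^ (((b + 1 : ℝ) : ℂ) - 1)) =
        ((t ^ a * (1 - t) ^ b : ℝ) : ℂ) := by
    intro t ht
    rw [Set.uIcc_of_le zero_le_one] at ht
    rw [Complex.ofReal_mul, Complex.ofReal_cpow ht.1, Complex.ofReal_cpow (by linarith [ht.2])]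
    simp
  rw [intervalIntegral.integral_congr this, intervalIntegral.integral_ofReal, Complex.ofReal_re]

theorem continuous_jacobiWeight_mul {a b : ℝ} (ha : 0 ≤ a) (hb : 0 ≤ b) {f : ℝ → ℝ}
    (hf : Continuous f) : Continuous fun t : ℝ => t ^ a * (1 - t) ^ b * f t :=
  ((Real.continuous_rpow_const ha).mul
    ((Real.continuous_rpow_const hb).comp (continuous_const.sub continuous_id))).mul hf

theorem hasDerivAt_jacobiWeight (a b : ℝ) {t : ℝ} (h0 : 0 < t) (h1 : t < 1) :
    HasDerivAt (fun t : ℝ => t ^ a * (1 - t) ^ b)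
      (t ^ a * (1 - t) ^ b * (a / t - b / (1 - t))) t := by
  have e1 := Real.hasDerivAt_rpow_const (x := t) (p := a) (Or.inl h0.ne')
  have e2 := ((hasDerivAt_id t).const_sub 1).rpow_const (p := b) (Or.inl (sub_pos.2 h1).ne')
  refine (e1.mul e2).congr_deriv ?_
  have h2 : 0 < 1 - t := sub_pos.2 h1
  simp only [id]
  rw [Real.rpow_sub_one h0.ne', Real.rpow_sub_one h2.ne']
  field_simp
  ring

theorem integral_unitJacobi_sq {a b : ℝ} (ha : 0 < a) (hb : 0 < b) (n : ℕ) :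
    ∫ t in (0 : ℝ)..1, t ^ a * (1 - t) ^ b * unitJacobi a b n t ^ 2 = unitJacobiNormSq a b n := by
  induction n generalizing a b with
  | zero =>
    rw [unitJacobiNormSq_zero ha hb, ← integral_rpow_mul_one_sub_rpow ha hb]
    simp [unitJacobi, genChoose]
  | succ n ih =>
    have hn : ((n : ℝ) + 1) ≠ 0 := by positivity
    refine mul_left_cancel₀ hn ?_
    rw [unitJacobiNormSq_succ ha hb, ← ih (by linarith) (by linarith),
      ← intervalIntegral.integral_const_mul, ← intervalIntegral.integral_const_mul, ← sub_eq_zero]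
    have c1 := (continuous_jacobiWeight_mul ha.le hb.le
      ((continuous_unitJacobi a b (n + 1)).pow 2)).const_mul ((n : ℝ) + 1)
    have c2 := (continuous_jacobiWeight_mul (a := a + 1) (b := b + 1) (by linarith) (by linarith)
      ((continuous_unitJacobi (a + 1) (b + 1) n).pow 2)).const_mul ((n : ℝ) + a + b + 2)
    have c3 := continuous_jacobiWeight_mul (a := a + 1) (b := b + 1) (by linarith) (by linarith)
      ((continuous_unitJacobi (a + 1) (b + 1) n).mul (continuous_unitJacobi a b (n + 1)))
    simp only [Pi.pow_apply, Pi.mul_apply] at c1 c2 c3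
    have c4 := c1.sub c2
    simp only [Pi.sub_def] at c4
    rw [← intervalIntegral.integral_sub (c1.intervalIntegrable _ _) (c2.intervalIntegrable _ _)]
    rw [intervalIntegral.integral_eq_sub_of_hasDerivAt_of_le zero_le_one c3.continuousOn _
      (c4.intervalIntegrable _ _)]
    · simp [Real.zero_rpow (show a + 1 ≠ 0 by linarith), Real.zero_rpow (show b + 1 ≠ 0 by linarith)]
    · rintro t ⟨h0, h1⟩
      have h2 : 0 < 1 - t := sub_pos.2 h1
      have d := (hasDerivAt_jacobiWeight (a + 1) (b + 1) h0 h1).mul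
        ((differentiable_unitJacobi (a + 1) (b + 1) n t).hasDerivAt.mul
          (hasDerivAt_unitJacobi_succ a b n t))
      refine d.congr_deriv ?_
      have r := deriv_unitJacobi_raise a b n t
      simp only [Pi.mul_apply]
      rw [Real.rpow_add_one h0.ne', Real.rpow_add_one h2.ne']
      field_simp
      linear_combination unitJacobi a b (n + 1) t * r

/-- The change of variables `t = sin² (θ / 2)`. -/
noncomputable def sinSqHalf (θ : ℝ) : ℝ := (1 - Real.cos θ) / 2

theorem hasDerivAt_sinSqHalf (θ : ℝ) : HasDerivAt sinSqHalf (Real.sin θ / 2) θ := by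
  unfold sinSqHalf
  refine (((Real.hasDerivAt_cos θ).const_sub 1).div_const 2).congr_deriv ?_
  ring

theorem sin_div_two_sq (θ : ℝ) : (Real.sin θ / 2) ^ 2 = sinSqHalf θ * (1 - sinSqHalf θ) := by
  unfold sinSqHalf
  linear_combination (1 / 4 : ℝ) * Real.sin_sq_add_cos_sq θ

theorem sinSqHalf_mem_Ioo {θ : ℝ} (h : θ ∈ Set.Ioo 0 Real.pi) :
    sinSqHalf θ ∈ Set.Ioo (0 : ℝ) 1 := by
  have hs := Real.sin_pos_of_mem_Ioo h
  have h2 := sin_div_two_sq θ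
  have : -1 ≤ Real.cos θ := Real.neg_one_le_cos θ
  have : Real.cos θ ≤ 1 := Real.cos_le_one θ
  have : 0 < sinSqHalf θ * (1 - sinSqHalf θ) := by rw [← h2]; positivity
  constructor <;> unfold sinSqHalf at * <;> nlinarith

theorem sinSqHalf_reflect (θ : ℝ) : sinSqHalf (Real.pi - θ) = 1 - sinSqHalf θ := by
  unfold sinSqHalf
  rw [Real.cos_pi_sub]
  ring

theorem sinSqHalf_arccos {t : ℝ} (h0 : 0 ≤ t) (h1 : t ≤ 1) :
    sinSqHalf (Real.arccos (1 - 2 * t)) = t := by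
  unfold sinSqHalf
  rw [Real.cos_arccos (by linarith) (by linarith)]
  ring

theorem arccos_mem_Ioo {t : ℝ} (h0 : 0 < t) (h1 : t < 1) :
    Real.arccos (1 - 2 * t) ∈ Set.Ioo 0 Real.pi := by
  refine ⟨Real.arccos_pos.2 (by linarith), lt_of_le_of_ne (Real.arccos_le_pi _) fun h => ?_⟩
  have := Real.arccos_eq_pi.1 h
  linarith

/-- The function `v` solves `(d/dθ)² v + (N² - A / sin² (θ / 2) - B / cos² (θ / 2)) v = 0` on `(0, π)`,
has derivative `y`, and `G` is a primitive of `v²` with values in `[0, H]`. -/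
structure IsTrigSturmSolution (N A B H : ℝ) (v y G : ℝ → ℝ) : Prop where
  hasDerivAt : ∀ θ ∈ Set.Ioo 0 Real.pi, HasDerivAt v (y θ) θ
  hasDerivAt_deriv : ∀ θ ∈ Set.Ioo 0 Real.pi,
    HasDerivAt y (-((N ^ 2 - A / sinSqHalf θ - B / (1 - sinSqHalf θ)) * v θ)) θ
  hasDerivAt_mass : ∀ θ ∈ Set.Ioo 0 Real.pi, HasDerivAt G (v θ ^ 2) θ
  mass_nonneg : ∀ θ ∈ Set.Ioo 0 Real.pi, 0 ≤ G θ
  mass_le : ∀ θ ∈ Set.Ioo 0 Real.pi, G θ ≤ H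

theorem IsTrigSturmSolution.reflect {N A B H : ℝ} {v y G : ℝ → ℝ}
    (h : IsTrigSturmSolution N A B H v y G) :
    IsTrigSturmSolution N B A H (fun θ => v (Real.pi - θ)) (fun θ => -y (Real.pi - θ))
      (fun θ => H - G (Real.pi - θ)) := by
  have hm : ∀ θ ∈ Set.Ioo 0 Real.pi, Real.pi - θ ∈ Set.Ioo 0 Real.pi := fun θ hθ =>
    ⟨by linarith [hθ.2], by linarith [hθ.1]⟩
  have hd : ∀ θ : ℝ, HasDerivAt (fun θ => Real.pi - θ) (-1) θ := fun θ =>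
    (hasDerivAt_id θ).const_sub _
  refine ⟨fun θ hθ => ?_, fun θ hθ => ?_, fun θ hθ => ?_, fun θ hθ => ?_, fun θ hθ => ?_⟩
  · exact ((h.hasDerivAt _ (hm θ hθ)).comp θ (hd θ)).congr_deriv (by ring)
  · refine ((h.hasDerivAt_deriv _ (hm θ hθ)).comp θ (hd θ)).neg.congr_deriv ?_
    rw [sinSqHalf_reflect, sub_sub_cancel]
    ring
  · exact (((h.hasDerivAt_mass _ (hm θ hθ)).comp θ (hd θ)).const_sub H).congr_deriv (by ring)
  · linarith [h.mass_le _ (hm θ hθ)]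
  · linarith [h.mass_nonneg _ (hm θ hθ)]

/-- The Jacobi polynomial multiplied by the square root of its weight in the variable `θ`. -/
noncomputable def trigJacobi (a b : ℝ) (n : ℕ) (θ : ℝ) : ℝ :=
  sinSqHalf θ ^ (a / 2 + 1 / 4) * (1 - sinSqHalf θ) ^ (b / 2 + 1 / 4) *
    unitJacobi a b n (sinSqHalf θ)

theorem jacobi_liouville_identity {a b n t r p Q dq w1 w2 : ℝ} (h0 : t ≠ 0) (h2 : 1 - t ≠ 0)
    (hsq : r ^ 2 = t * (1 - t))
    (hr : t * (1 - t) * dq + ((a + 1) * (1 - t) - (b + 1) * t) * Q = (n + 1) * p) :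
    w1 * w2 * ((a / 2 + 1 / 4) / t - (b / 2 + 1 / 4) / (1 - t)) * r *
        (r * (-(n + a + b + 2) * Q + ((a / 2 + 1 / 4) / t - (b / 2 + 1 / 4) / (1 - t)) * p)) +
      w1 * w2 * ((1 - 2 * t) / 2 *
            (-(n + a + b + 2) * Q + ((a / 2 + 1 / 4) / t - (b / 2 + 1 / 4) / (1 - t)) * p) +
          r * (-(n + a + b + 2) * (dq * r) +
              (((0 * t - (a / 2 + 1 / 4) * r) / t ^ 2 -
                (0 * (1 - t) - (b / 2 + 1 / 4) * -r) / (1 - t) ^ 2) * p +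
                ((a / 2 + 1 / 4) / t - (b / 2 + 1 / 4) / (1 - t)) *
                  (-(n + a + b + 2) * Q * r)))) =
    -(((n + 1 + (a + b + 1) / 2) ^ 2 - (a ^ 2 - 1 / 4) / 4 / t - (b ^ 2 - 1 / 4) / 4 / (1 - t)) *
      (w1 * w2 * p)) := by
  have hdq : dq = ((n + 1) * p - ((a + 1) * (1 - t) - (b + 1) * t) * Q) / (t * (1 - t)) := by
    rw [eq_div_iff (mul_ne_zero h0 h2)]
    linear_combination hr
  have hE : ∀ L M S l : ℝ, w1 * w2 * L * r * (r * M) + w1 * w2 * (S + r * (l * (dq * r) +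
      (((0 * t - (a / 2 + 1 / 4) * r) / t ^ 2 -
        (0 * (1 - t) - (b / 2 + 1 / 4) * -r) / (1 - t) ^ 2) * p + L * (l * Q * r)))) =
      w1 * w2 * (r ^ 2 * (L * M + l * dq - ((a / 2 + 1 / 4) / t ^ 2 +
        (b / 2 + 1 / 4) / (1 - t) ^ 2) * p + L * l * Q) + S) := fun _ _ _ _ => by ring
  rw [hE, hsq, hdq]
  field_simp
  ring

theorem isTrigSturmSolution_trigJacobi {a b : ℝ} (ha : 0 < a) (hb : 0 < b) (n : ℕ) :
    ∃ y G : ℝ → ℝ, IsTrigSturmSolution (((n + 1 : ℕ) : ℝ) + (a + b + 1) / 2)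
      ((a ^ 2 - 1 / 4) / 4) ((b ^ 2 - 1 / 4) / 4) (unitJacobiNormSq a b (n + 1))
      (trigJacobi a b (n + 1)) y G := by
  set P := unitJacobi a b (n + 1) with hPdef
  set q := unitJacobi (a + 1) (b + 1) n with hqdef
  set M := (n : ℝ) + a + b + 2 with hM
  set w : ℝ → ℝ := fun t => t ^ a * (1 - t) ^ b * P t ^ 2
  have hw : Continuous w := continuous_jacobiWeight_mul ha.le hb.le
    ((continuous_unitJacobi a b (n + 1)).pow 2)
  have hw0 : ∀ t ∈ Set.Icc (0 : ℝ) 1, 0 ≤ w t := fun t ht => by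
    have := Real.rpow_nonneg ht.1 a
    have := Real.rpow_nonneg (sub_nonneg.2 ht.2) b
    positivity
  have hW : ∀ θ ∈ Set.Ioo 0 Real.pi, HasDerivAt
      (fun θ => sinSqHalf θ ^ (a / 2 + 1 / 4) * (1 - sinSqHalf θ) ^ (b / 2 + 1 / 4)) _ θ :=
    fun θ hθ => (hasDerivAt_jacobiWeight (a / 2 + 1 / 4) (b / 2 + 1 / 4)
      (sinSqHalf_mem_Ioo hθ).1 (sinSqHalf_mem_Ioo hθ).2).comp θ (hasDerivAt_sinSqHalf θ)
  refine ⟨fun θ => sinSqHalf θ ^ (a / 2 + 1 / 4) * (1 - sinSqHalf θ) ^ (b / 2 + 1 / 4) *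
    (Real.sin θ / 2 * (-M * q (sinSqHalf θ) + ((a / 2 + 1 / 4) / sinSqHalf θ
      - (b / 2 + 1 / 4) / (1 - sinSqHalf θ)) * P (sinSqHalf θ))),
    fun θ => ∫ t in (0 : ℝ)..sinSqHalf θ, w t,
    fun θ hθ => ?_, fun θ hθ => ?_, fun θ hθ => ?_, fun θ hθ => ?_, fun θ hθ => ?_⟩
  · obtain ⟨h0, h1⟩ := sinSqHalf_mem_Ioo hθ
    refine ((hW θ hθ).mul ((hasDerivAt_unitJacobi_succ a b n (sinSqHalf θ)).comp θ
      (hasDerivAt_sinSqHalf θ))).congr_deriv ?_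
    simp only [Function.comp]
    ring
  · obtain ⟨h0, h1⟩ := sinSqHalf_mem_Ioo hθ
    have h2 : 0 < 1 - sinSqHalf θ := sub_pos.2 h1
    have ht := hasDerivAt_sinSqHalf θ
    have hP := (hasDerivAt_unitJacobi_succ a b n (sinSqHalf θ)).comp θ ht
    have hq := (differentiable_unitJacobi (a + 1) (b + 1) n (sinSqHalf θ)).hasDerivAt.comp θ ht
    have hs := (Real.hasDerivAt_sin θ).div_const 2
    have hl1 := (hasDerivAt_const θ (a / 2 + 1 / 4)).div ht h0.ne'
    have hl2 := (hasDerivAt_const θ (b / 2 + 1 / 4)).div (ht.const_sub 1) h2.ne'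
    refine ((hW θ hθ).mul (hs.mul ((hq.const_mul (-M)).add ((hl1.sub hl2).mul hP)))).congr_deriv ?_
    have hr := deriv_unitJacobi_raise a b n (sinSqHalf θ)
    have hc : Real.cos θ = 1 - 2 * sinSqHalf θ := by unfold sinSqHalf; ring
    have hsq := sin_div_two_sq θ
    simp only [Function.comp, Pi.mul_apply, Pi.add_apply, Pi.sub_apply, Pi.div_apply]
    unfold trigJacobi
    rw [hc]
    rw [← hPdef, ← hqdef, ← hM]
    push_cast
    rw [← hPdef, ← hqdef] at hr
    clear hP hq hl1 hl2 hW ht hs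
    generalize deriv q (sinSqHalf θ) = dq at *
    generalize q (sinSqHalf θ) = Q at *
    generalize P (sinSqHalf θ) = p at *
    generalize sinSqHalf θ ^ (a / 2 + 1 / 4) = w1
    generalize (1 - sinSqHalf θ) ^ (b / 2 + 1 / 4) = w2
    generalize Real.sin θ / 2 = r at *
    generalize sinSqHalf θ = t at *
    exact jacobi_liouville_identity h0.ne' h2.ne' hsq hr
  · obtain ⟨h0, h1⟩ := sinSqHalf_mem_Ioo hθ
    have h2 : 0 < 1 - sinSqHalf θ := sub_pos.2 h1
    refine ((hw.integral_hasStrictDerivAt 0 (sinSqHalf θ)).hasDerivAt.comp θ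
      (hasDerivAt_sinSqHalf θ)).congr_deriv ?_
    have hs : Real.sin θ / 2 = sinSqHalf θ ^ (1 / 2 : ℝ) * (1 - sinSqHalf θ) ^ (1 / 2 : ℝ) := by
      rw [← Real.mul_rpow h0.le h2.le, ← Real.sqrt_eq_rpow, ← sin_div_two_sq, Real.sqrt_sq]
      linarith [Real.sin_pos_of_mem_Ioo hθ]
    have e : ∀ {x c : ℝ}, 0 < x → (x ^ (c / 2 + 1 / 4)) ^ 2 = x ^ c * x ^ (1 / 2 : ℝ) := by
      intro x c hx
      rw [← Real.rpow_add hx, ← Real.rpow_mul_natCast hx.le]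
      congr 1
      push_cast
      ring
    rw [hs, trigJacobi, mul_pow, mul_pow, e h0, e h2]
    ring
  · obtain ⟨h0, h1⟩ := sinSqHalf_mem_Ioo hθ
    exact intervalIntegral.integral_nonneg h0.le fun t ht => hw0 t ⟨ht.1, ht.2.trans h1.le⟩
  · obtain ⟨h0, h1⟩ := sinSqHalf_mem_Ioo hθ
    rw [← integral_unitJacobi_sq ha hb]
    exact intervalIntegral.integral_mono_interval le_rfl h0.le h1.le
      ((MeasureTheory.ae_restrict_iff' measurableSet_Ioc).2
        (Filter.Eventually.of_forall fun t ht => hw0 t ⟨ht.1.le, ht.2⟩))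
      (hw.intervalIntegrable _ _)

theorem le_of_hasDerivAt_nonneg {f f' : ℝ → ℝ} {a b : ℝ} (hab : a ≤ b)
    (hf : ∀ x ∈ Set.Icc a b, HasDerivAt f (f' x) x) (h0 : ∀ x ∈ Set.Icc a b, 0 ≤ f' x) :
    f a ≤ f b := by
  refine monotoneOn_of_hasDerivWithinAt_nonneg (f' := f') (convex_Icc a b)
    (fun x hx => (hf x hx).continuousAt.continuousWithinAt) (fun x hx => ?_) (fun x hx => ?_)
    (Set.left_mem_Icc.2 hab) (Set.right_mem_Icc.2 hab) hab
  · exact (hf x (interior_subset hx)).hasDerivWithinAt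
  · exact h0 x (interior_subset hx)

/-- The virial quadratic form in `y` and `v` with multiplier `g θ = (sin θ / 2) * k t`,
where `t = sin² (θ / 2)`, `φ = N² (t - t₁) (t₂ - t) / (t (1 - t))`, and `k₁`, `k₂` are the
derivatives of `k`. -/
noncomputable def virialForm (N t₁ t₂ : ℝ) (k k₁ k₂ v y : ℝ → ℝ) (θ : ℝ) : ℝ :=
  2 * (Real.sin θ / 2) * k (sinSqHalf θ) * y θ ^ 2 +
    2 * k (sinSqHalf θ) * (N ^ 2 * (sinSqHalf θ - t₁) * (t₂ - sinSqHalf θ)) / (Real.sin θ / 2) *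
      v θ ^ 2 -
    2 * ((Real.sin θ / 2) ^ 2 * k₁ (sinSqHalf θ) + Real.cos θ / 2 * k (sinSqHalf θ)) * y θ * v θ +
    (Real.sin θ / 2) * ((Real.sin θ / 2) ^ 2 * k₂ (sinSqHalf θ) +
      3 / 2 * Real.cos θ * k₁ (sinSqHalf θ) - k (sinSqHalf θ)) * v θ ^ 2

/-- The derivative of `virialForm` acts on `v ^ 2` through this third order operator in `g`. -/
noncomputable def virialOp (N t₁ t₂ t κ κ₁ κ₂ κ₃ : ℝ) : ℝ :=
  (t * (1 - t)) ^ 2 * κ₃ + 3 * (t * (1 - t)) * (1 - 2 * t) * κ₂ +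
    (3 / 4 - 7 * (t * (1 - t))) * κ₁ - (1 - 2 * t) * κ / 2 +
    4 * (N ^ 2 * (t - t₁) * (t₂ - t)) * κ₁ + 2 * (N ^ 2 * (t₁ + t₂ - 2 * t)) * κ

theorem cos_eq_one_sub_sinSqHalf (θ : ℝ) : Real.cos θ = 1 - 2 * sinSqHalf θ := by
  unfold sinSqHalf
  ring

theorem sturm_potential_eq {N t₁ t₂ t : ℝ} (h0 : 0 < t) (h1 : t < 1) :
    N ^ 2 - N ^ 2 * t₁ * t₂ / t - N ^ 2 * (1 - t₁) * (1 - t₂) / (1 - t) =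
      N ^ 2 * (t - t₁) * (t₂ - t) / (t * (1 - t)) := by
  have : 1 - t ≠ 0 := by linarith
  field_simp
  ring

theorem hasDerivAt_virialForm {N t₁ t₂ H : ℝ} {v y G k k₁ k₂ k₃ : ℝ → ℝ}
    (h : IsTrigSturmSolution N (N ^ 2 * t₁ * t₂) (N ^ 2 * (1 - t₁) * (1 - t₂)) H v y G)
    {θ : ℝ} (hθ : θ ∈ Set.Ioo 0 Real.pi)
    (hk : HasDerivAt k (k₁ (sinSqHalf θ)) (sinSqHalf θ))
    (hk₁ : HasDerivAt k₁ (k₂ (sinSqHalf θ)) (sinSqHalf θ))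
    (hk₂ : HasDerivAt k₂ (k₃ (sinSqHalf θ)) (sinSqHalf θ)) :
    HasDerivAt (virialForm N t₁ t₂ k k₁ k₂ v y)
      (v θ ^ 2 * virialOp N t₁ t₂ (sinSqHalf θ) (k (sinSqHalf θ)) (k₁ (sinSqHalf θ))
        (k₂ (sinSqHalf θ)) (k₃ (sinSqHalf θ))) θ := by
  obtain ⟨h0, h1⟩ := sinSqHalf_mem_Ioo hθ
  have ht := hasDerivAt_sinSqHalf θ
  have hr := (Real.hasDerivAt_sin θ).div_const 2
  have hc := (Real.hasDerivAt_cos θ)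
  have r0 : Real.sin θ / 2 ≠ 0 := by have := Real.sin_pos_of_mem_Ioo hθ; positivity
  have hv := h.hasDerivAt θ hθ
  have hy := h.hasDerivAt_deriv θ hθ
  rw [sturm_potential_eq h0 h1, ← sin_div_two_sq] at hy
  have ek := hk.comp θ ht
  have ek1 := hk₁.comp θ ht
  have ek2 := hk₂.comp θ ht
  have eR := ((ht.sub_const t₁).const_mul (N ^ 2)).mul (ht.const_sub t₂)
  have T1 := ((hr.const_mul 2).mul ek).mul (hy.pow 2)
  have T2 := (((ek.const_mul 2).mul eR).div hr r0).mul (hv.pow 2)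
  have T3 := (((((hr.pow 2).mul ek1).add ((hc.div_const 2).mul ek)).const_mul 2).mul hy).mul hv
  have T4 := (hr.mul ((((hr.pow 2).mul ek2).add ((hc.const_mul (3 / 2)).mul ek1)).sub ek)).mul
    (hv.pow 2)
  refine (((T1.add T2).sub T3).add T4).congr_deriv ?_
  have hsq := sin_div_two_sq θ
  have hcos := cos_eq_one_sub_sinSqHalf θ
  have hs : Real.sin θ = 2 * (Real.sin θ / 2) := by ring
  unfold virialOp
  simp only [Function.comp, Pi.mul_apply, Pi.add_apply, Pi.sub_apply, Pi.div_apply, Pi.pow_apply]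
  clear T1 T2 T3 T4 ek ek1 ek2 eR hy hv hc hr ht h hk hk₁ hk₂
  rw [← hsq, hcos, hs]
  generalize k (sinSqHalf θ) = a0
  generalize k₁ (sinSqHalf θ) = a1
  generalize k₂ (sinSqHalf θ) = a2
  generalize k₃ (sinSqHalf θ) = a3
  generalize v θ = V
  generalize y θ = Y
  rw [show 2 * (Real.sin θ / 2) / 2 = Real.sin θ / 2 by ring]
  generalize Real.sin θ / 2 = r at *
  generalize sinSqHalf θ = t at *
  clear hcos hs h0 h1
  norm_num
  field_simp
  linear_combination (48 * a1 * V ^ 2 * r ^ 2) * hsq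

theorem strictMonoOn_sinSqHalf : StrictMonoOn sinSqHalf (Set.Icc 0 Real.pi) := by
  intro a ha b hb hab
  have := Real.strictAntiOn_cos ha hb hab
  unfold sinSqHalf
  linarith

theorem virialForm_le_add_of_virialOp_le {N t₁ t₂ H K θ₀ θ₁ : ℝ} {v y G k k₁ k₂ k₃ : ℝ → ℝ}
    (h : IsTrigSturmSolution N (N ^ 2 * t₁ * t₂) (N ^ 2 * (1 - t₁) * (1 - t₂)) H v y G)
    (hsub : Set.Icc θ₀ θ₁ ⊆ Set.Ioo 0 Real.pi) (hle : θ₀ ≤ θ₁) (hK : 0 ≤ K)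
    (hk : ∀ θ ∈ Set.Icc θ₀ θ₁, HasDerivAt k (k₁ (sinSqHalf θ)) (sinSqHalf θ))
    (hk₁ : ∀ θ ∈ Set.Icc θ₀ θ₁, HasDerivAt k₁ (k₂ (sinSqHalf θ)) (sinSqHalf θ))
    (hk₂ : ∀ θ ∈ Set.Icc θ₀ θ₁, HasDerivAt k₂ (k₃ (sinSqHalf θ)) (sinSqHalf θ))
    (hL : ∀ θ ∈ Set.Icc θ₀ θ₁, virialOp N t₁ t₂ (sinSqHalf θ) (k (sinSqHalf θ))
      (k₁ (sinSqHalf θ)) (k₂ (sinSqHalf θ)) (k₃ (sinSqHalf θ)) ≤ K) :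
    virialForm N t₁ t₂ k k₁ k₂ v y θ₁ ≤ virialForm N t₁ t₂ k k₁ k₂ v y θ₀ + K * H := by
  have key := le_of_hasDerivAt_nonneg (f := fun θ => K * G θ - virialForm N t₁ t₂ k k₁ k₂ v y θ)
    hle (fun θ hθ => ((h.hasDerivAt_mass θ (hsub hθ)).const_mul K).sub
      (hasDerivAt_virialForm h (hsub hθ) (hk θ hθ) (hk₁ θ hθ) (hk₂ θ hθ)))
    (fun θ hθ => by nlinarith [hL θ hθ, sq_nonneg (v θ)])
  have h0 := mul_nonneg hK (h.mass_nonneg _ (hsub (Set.left_mem_Icc.2 hle)))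
  have h1 := mul_le_mul_of_nonneg_left (h.mass_le _ (hsub (Set.right_mem_Icc.2 hle))) hK
  linarith

theorem virialForm_le_add_of_le_virialOp {N t₁ t₂ H K θ₀ θ₁ : ℝ} {v y G k k₁ k₂ k₃ : ℝ → ℝ}
    (h : IsTrigSturmSolution N (N ^ 2 * t₁ * t₂) (N ^ 2 * (1 - t₁) * (1 - t₂)) H v y G)
    (hsub : Set.Icc θ₀ θ₁ ⊆ Set.Ioo 0 Real.pi) (hle : θ₀ ≤ θ₁) (hK : 0 ≤ K)
    (hk : ∀ θ ∈ Set.Icc θ₀ θ₁, HasDerivAt k (k₁ (sinSqHalf θ)) (sinSqHalf θ))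
    (hk₁ : ∀ θ ∈ Set.Icc θ₀ θ₁, HasDerivAt k₁ (k₂ (sinSqHalf θ)) (sinSqHalf θ))
    (hk₂ : ∀ θ ∈ Set.Icc θ₀ θ₁, HasDerivAt k₂ (k₃ (sinSqHalf θ)) (sinSqHalf θ))
    (hL : ∀ θ ∈ Set.Icc θ₀ θ₁, -K ≤ virialOp N t₁ t₂ (sinSqHalf θ) (k (sinSqHalf θ))
      (k₁ (sinSqHalf θ)) (k₂ (sinSqHalf θ)) (k₃ (sinSqHalf θ))) :
    virialForm N t₁ t₂ k k₁ k₂ v y θ₀ ≤ virialForm N t₁ t₂ k k₁ k₂ v y θ₁ + K * H := by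
  have key := le_of_hasDerivAt_nonneg (f := fun θ => K * G θ + virialForm N t₁ t₂ k k₁ k₂ v y θ)
    hle (fun θ hθ => ((h.hasDerivAt_mass θ (hsub hθ)).const_mul K).add
      (hasDerivAt_virialForm h (hsub hθ) (hk θ hθ) (hk₁ θ hθ) (hk₂ θ hθ)))
    (fun θ hθ => by nlinarith [hL θ hθ, sq_nonneg (v θ)])
  have h0 := mul_nonneg hK (h.mass_nonneg _ (hsub (Set.left_mem_Icc.2 hle)))
  have h1 := mul_le_mul_of_nonneg_left (h.mass_le _ (hsub (Set.right_mem_Icc.2 hle))) hK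
  linarith

/-- `virialForm` multiplied by `sin θ / 2`, expressed through `t`, `Y = (sin θ / 2) * y` and `v`. -/
theorem sin_mul_virialForm {N t₁ t₂ θ : ℝ} (k k₁ k₂ v y : ℝ → ℝ)
    (hθ : θ ∈ Set.Ioo 0 Real.pi) {t V Y : ℝ} (ht : sinSqHalf θ = t) (hV : v θ = V)
    (hY : Real.sin θ / 2 * y θ = Y) :
    Real.sin θ / 2 * virialForm N t₁ t₂ k k₁ k₂ v y θ =
      2 * k t * Y ^ 2 + 2 * k t * (N ^ 2 * (t - t₁) * (t₂ - t)) * V ^ 2 -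
        2 * (t * (1 - t) * k₁ t + (1 - 2 * t) / 2 * k t) * Y * V +
        t * (1 - t) * (t * (1 - t) * k₂ t + 3 / 2 * (1 - 2 * t) * k₁ t - k t) * V ^ 2 := by
  have r0 : Real.sin θ / 2 ≠ 0 := by have := Real.sin_pos_of_mem_Ioo hθ; positivity
  have hsq := sin_div_two_sq θ
  have hcos := cos_eq_one_sub_sinSqHalf θ
  rw [ht] at hsq hcos
  unfold virialForm
  rw [← hY, ht, hV, hcos, ← hsq]
  generalize Real.sin θ / 2 = r at *
  field_simp

theorem quadratic_nonneg {a b c : ℝ} (ha : 0 < a) (h : b ^ 2 ≤ a * c) (x z : ℝ) :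
    0 ≤ a * x ^ 2 - 2 * b * x * z + c * z ^ 2 := by
  have : 0 ≤ a * (a * x ^ 2 - 2 * b * x * z + c * z ^ 2) := by
    nlinarith [sq_nonneg (a * x - b * z), sq_nonneg z]
  exact nonneg_of_mul_nonneg_right this ha

section Interval

variable {t₁ w : ℝ}

theorem mul_one_sub_le {s : ℝ} (h1 : 0 ≤ t₁) (hs : 0 ≤ s) :
    (t₁ + s) * (1 - (t₁ + s)) ≤ t₁ * (1 - t₁) + s := by
  nlinarith [mul_nonneg h1 hs]

theorem half_le_mid (h1 : 0 ≤ t₁) (hw : 0 ≤ w) (h2 : t₁ + 2 * w ≤ 1) :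
    w ≤ 2 * ((t₁ + w) * (1 - (t₁ + w))) := by
  rcases le_total (t₁ + w) (1 / 2) with h | h <;> nlinarith

theorem virialOp_cube_le {N s D : ℝ} (h1 : 0 ≤ t₁) (hw : 0 ≤ w) (h2 : t₁ + 2 * w ≤ 1)
    (hs : 0 ≤ s) (hsw : s ≤ w) (hD : 172 ≤ D)
    (hN : D * ((t₁ + w) * (1 - (t₁ + w))) ^ 2 ≤ N ^ 2 * w ^ 4) :
    virialOp N t₁ (t₁ + 2 * w) (t₁ + s) (s ^ 3) (3 * s ^ 2) (6 * s) 6 ≤ 17 * N ^ 2 * w ^ 4 := by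
  have hm := half_le_mid h1 hw h2
  set T := (t₁ + w) * (1 - (t₁ + w)) with hT
  have h0 : 0 ≤ (t₁ + s) * (1 - (t₁ + s)) := mul_nonneg (by linarith) (by linarith)
  have hτ : (t₁ + s) * (1 - (t₁ + s)) ≤ 3 * T := by
    rw [hT]
    nlinarith
  have hc : |1 - 2 * (t₁ + s)| ≤ 1 := abs_le.2 ⟨by linarith, by linarith⟩
  unfold virialOp
  generalize (t₁ + s) * (1 - (t₁ + s)) = τ at *
  generalize 1 - 2 * (t₁ + s) = c at *
  obtain ⟨c1, c2⟩ := abs_le.1 hc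
  have e1 : τ ^ 2 ≤ 9 * T ^ 2 := by nlinarith
  have e2 : τ * s ≤ 6 * T ^ 2 := by nlinarith
  have e3 : s ^ 2 ≤ 4 * T ^ 2 := by nlinarith
  have e4 : s ^ 3 ≤ s ^ 2 / 2 := by nlinarith
  have e5 : c * (τ * s) ≤ τ * s := by nlinarith [mul_nonneg h0 hs]
  have e6 : -(c * s ^ 3) ≤ s ^ 3 := by nlinarith [pow_nonneg hs 3]
  have e7 : 0 ≤ τ * s ^ 2 := by positivity
  have e8 : s ^ 3 * (28 * w - 16 * s) ≤ 16 * w ^ 4 := by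
    nlinarith [mul_nonneg (sub_nonneg.2 hsw) (mul_nonneg hs (pow_nonneg hw 2)),
      mul_nonneg (sq_nonneg (w - s)) (pow_nonneg hs 2),
      mul_nonneg (sq_nonneg (w - s)) (mul_nonneg hs hw),
      mul_nonneg (sq_nonneg (w - s)) (pow_nonneg hw 2)]
  have e9 := mul_le_mul_of_nonneg_left e8 (sq_nonneg N)
  have e10 : 172 * T ^ 2 ≤ N ^ 2 * w ^ 4 :=
    (mul_le_mul_of_nonneg_right hD (sq_nonneg T)).trans hN
  have : τ ^ 2 * 6 + 3 * τ * c * (6 * s) + (3 / 4 - 7 * τ) * (3 * s ^ 2) - c * s ^ 3 / 2 +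
      4 * (N ^ 2 * (t₁ + s - t₁) * (t₁ + 2 * w - (t₁ + s))) * (3 * s ^ 2) +
      2 * (N ^ 2 * (t₁ + (t₁ + 2 * w) - 2 * (t₁ + s))) * s ^ 3 =
      6 * τ ^ 2 + 18 * (c * (τ * s)) + 9 / 4 * s ^ 2 - 21 * (τ * s ^ 2) + -(c * s ^ 3) / 2 +
      N ^ 2 * (s ^ 3 * (28 * w - 16 * s)) := by ring
  rw [this]
  linarith

end Interval

theorem cube_form_ge {N t₁ w D Y V : ℝ} (h1 : 0 ≤ t₁) (hw : 0 < w) (h2 : t₁ + 2 * w ≤ 1)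
    (hD : 172 ≤ D) (hN : D * ((t₁ + w) * (1 - (t₁ + w))) ^ 2 ≤ N ^ 2 * w ^ 4) :
    w ^ 3 * (Y ^ 2 + N ^ 2 * w ^ 2 * V ^ 2) ≤
      2 * w ^ 3 * Y ^ 2 + 2 * w ^ 3 * (N ^ 2 * w * w) * V ^ 2 -
        2 * ((t₁ + w) * (1 - (t₁ + w)) * (3 * w ^ 2) + (1 - 2 * (t₁ + w)) / 2 * w ^ 3) * Y * V +
        (t₁ + w) * (1 - (t₁ + w)) * ((t₁ + w) * (1 - (t₁ + w)) * (6 * w) +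
          3 / 2 * (1 - 2 * (t₁ + w)) * (3 * w ^ 2) - w ^ 3) * V ^ 2 := by
  have hm := half_le_mid h1 hw.le h2
  have hc : |1 - 2 * (t₁ + w)| ≤ 1 := abs_le.2 ⟨by linarith, by linarith⟩
  have hw1 : w ≤ 1 / 2 := by linarith
  set T := (t₁ + w) * (1 - (t₁ + w))
  generalize 1 - 2 * (t₁ + w) = c at *
  obtain ⟨c1, c2⟩ := abs_le.1 hc
  have e10 : 172 * T ^ 2 ≤ N ^ 2 * w ^ 4 :=
    (mul_le_mul_of_nonneg_right hD (sq_nonneg T)).trans hN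
  have b0 : |T * (3 * w ^ 2) + c / 2 * w ^ 3| ≤ 4 * T * w ^ 2 := by
    have : |c / 2 * w ^ 3| ≤ T * w ^ 2 := by
      rw [abs_mul, abs_div, abs_of_pos (pow_pos hw 3), abs_two]
      nlinarith [pow_pos hw 3, pow_pos hw 2]
    calc _ ≤ |T * (3 * w ^ 2)| + |c / 2 * w ^ 3| := abs_add_le _ _
      _ ≤ T * (3 * w ^ 2) + T * w ^ 2 := by
        rw [abs_of_nonneg (by nlinarith [pow_pos hw 2])]
        linarith
      _ = _ := by ring
  have b1 : (T * (3 * w ^ 2) + c / 2 * w ^ 3) ^ 2 ≤ 16 * T ^ 2 * w ^ 4 := by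
    have := pow_le_pow_left₀ (abs_nonneg _) b0 2
    rw [sq_abs] at this
    linarith
  have b2 : -(4 * T * w) ≤ T * (6 * w) + 3 / 2 * c * (3 * w ^ 2) - w ^ 3 := by
    nlinarith [pow_pos hw 2, pow_pos hw 3]
  have b3 : -(4 * T ^ 2 * w) ≤ T * (T * (6 * w) + 3 / 2 * c * (3 * w ^ 2) - w ^ 3) := by
    nlinarith
  have b4 : (T * (3 * w ^ 2) + c / 2 * w ^ 3) ^ 2 ≤
      w ^ 3 * (N ^ 2 * w ^ 5 + T * (T * (6 * w) + 3 / 2 * c * (3 * w ^ 2) - w ^ 3)) := by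
    have := mul_le_mul_of_nonneg_left b3 (pow_pos hw 3).le
    have := mul_le_mul_of_nonneg_left e10 (pow_pos hw 4).le
    nlinarith [mul_nonneg (sq_nonneg T) (pow_pos hw 4).le]
  have := quadratic_nonneg (pow_pos hw 3) b4 Y V
  linarith

theorem IsTrigSturmSolution.mid_bound {N t₁ w H D θ₁ : ℝ} {v y G : ℝ → ℝ}
    (h : IsTrigSturmSolution N (N ^ 2 * t₁ * (t₁ + 2 * w))
      (N ^ 2 * (1 - t₁) * (1 - (t₁ + 2 * w))) H v y G)
    (h1 : 0 < t₁) (hw : 0 < w) (h2 : t₁ + 2 * w < 1) (hD : 172 ≤ D)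
    (hN : D * ((t₁ + w) * (1 - (t₁ + w))) ^ 2 ≤ N ^ 2 * w ^ 4)
    (hθ : θ₁ ∈ Set.Ioo 0 Real.pi) (hθt : sinSqHalf θ₁ = t₁ + w) :
    (Real.sin θ₁ / 2 * y θ₁) ^ 2 + N ^ 2 * w ^ 2 * v θ₁ ^ 2 ≤
      17 * N ^ 2 * w * H * (Real.sin θ₁ / 2) := by
  have m0 := arccos_mem_Ioo h1 (by linarith : t₁ < 1)
  have t0 := sinSqHalf_arccos h1.le (by linarith : t₁ ≤ 1)
  set θ₀ := Real.arccos (1 - 2 * t₁)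
  have hmono := strictMonoOn_sinSqHalf.monotoneOn
  have hle : θ₀ ≤ θ₁ := by
    rw [← strictMonoOn_sinSqHalf.le_iff_le (Set.Ioo_subset_Icc_self m0)
      (Set.Ioo_subset_Icc_self hθ), t0, hθt]
    linarith
  have hsub : Set.Icc θ₀ θ₁ ⊆ Set.Ioo 0 Real.pi := Set.Icc_subset_Ioo m0.1 hθ.2
  have d0 : ∀ t : ℝ, HasDerivAt (fun t => (t - t₁) ^ 3) (3 * (t - t₁) ^ 2) t := fun t =>
    (((hasDerivAt_id t).sub_const t₁).pow 3).congr_deriv (by norm_num)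
  have d1 : ∀ t : ℝ, HasDerivAt (fun t => 3 * (t - t₁) ^ 2) (6 * (t - t₁)) t := fun t =>
    ((((hasDerivAt_id t).sub_const t₁).pow 2).const_mul 3).congr_deriv (by norm_num; ring)
  have d2 : ∀ t : ℝ, HasDerivAt (fun t => 6 * (t - t₁)) 6 t := fun t =>
    (((hasDerivAt_id t).sub_const t₁).const_mul 6).congr_deriv (by norm_num)
  have key := virialForm_le_add_of_virialOp_le (k₃ := fun _ => 6) (K := 17 * N ^ 2 * w ^ 4) h hsub
    hle (by positivity) (fun θ _ => d0 _) (fun θ _ => d1 _) (fun θ _ => d2 _) (fun θ hθ' => by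
      have a0 := hmono (Set.Ioo_subset_Icc_self m0) (Set.Ioo_subset_Icc_self (hsub hθ')) hθ'.1
      have a1 := hmono (Set.Ioo_subset_Icc_self (hsub hθ')) (Set.Ioo_subset_Icc_self hθ) hθ'.2
      rw [t0] at a0
      rw [hθt] at a1
      have := virialOp_cube_le (s := sinSqHalf θ - t₁) h1.le hw.le h2.le (by linarith)
        (by linarith) hD hN
      rwa [add_sub_cancel] at this)
  have hz : virialForm N t₁ (t₁ + 2 * w) (fun t => (t - t₁) ^ 3) (fun t => 3 * (t - t₁) ^ 2)
      (fun t => 6 * (t - t₁)) v y θ₀ = 0 := by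
    simp [virialForm, t0]
  rw [hz, zero_add] at key
  have r0 : 0 < Real.sin θ₁ / 2 := by have := Real.sin_pos_of_mem_Ioo hθ; positivity
  have e := sin_mul_virialForm (N := N) (t₁ := t₁) (t₂ := t₁ + 2 * w) (fun t => (t - t₁) ^ 3)
    (fun t => 3 * (t - t₁) ^ 2) (fun t => 6 * (t - t₁)) v y hθ hθt rfl rfl
  have g := cube_form_ge (Y := Real.sin θ₁ / 2 * y θ₁) (V := v θ₁) h1.le hw h2.le hD hN
  simp only [show t₁ + w - t₁ = w by ring, show t₁ + 2 * w - (t₁ + w) = w by ring] at e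
  rw [← e] at g
  have := g.trans (mul_le_mul_of_nonneg_left key r0.le)
  refine le_of_mul_le_mul_left (this.trans_eq ?_) (pow_pos hw 3)
  ring

theorem hasDerivAt_div_sqrt_pow (c d : ℝ) (m : ℕ) {t : ℝ} (ht : 0 < t - d) :
    HasDerivAt (fun t => c / √(t - d) ^ (m + 1)) (-(c * (m + 1) / 2) / √(t - d) ^ (m + 3)) t := by
  have hs := Real.sqrt_pos.2 ht
  have := (((((hasDerivAt_id t).sub_const d).sqrt ht.ne').pow (m + 1)).inv
    (pow_pos hs _).ne').const_mul c
  simp only [div_eq_mul_inv c]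
  refine this.congr_deriv ?_
  simp only [Pi.pow_apply, id]
  push_cast
  field_simp
  ring

section Edge

variable {N t₁ w ε s : ℝ}

theorem edge_ratio (h1 : 0 ≤ t₁) (ht1 : t₁ ≤ 1) (hε : 0 < ε) (hs : 0 ≤ s)
    (hE : 8 ≤ N ^ 2 * w * ε) (hτ : 4 * (t₁ * (1 - t₁)) ^ 2 ≤ N ^ 2 * w * ε * ε ^ 2) :
    5 * ((t₁ + s) * (1 - (t₁ + s))) ≤ N ^ 2 * w * ε * (s + ε) ∧
      2 * (t₁ * (1 - t₁) + s) ^ 2 ≤ N ^ 2 * w * ε * (s + ε) ^ 2 := by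
  have hm := mul_one_sub_le h1 hs
  have h0 : 0 ≤ t₁ * (1 - t₁) := mul_nonneg h1 (by linarith)
  generalize N ^ 2 * w * ε = E at *
  generalize t₁ * (1 - t₁) = T at *
  have h5 : 5 * T ≤ E * ε := by
    refine (pow_le_pow_iff_left₀ (by positivity) (by positivity) two_ne_zero).1 ?_
    nlinarith [mul_le_mul_of_nonneg_left hτ (by linarith : 0 ≤ E), sq_nonneg T]
  constructor
  · nlinarith
  · nlinarith [sq_nonneg (T - s), mul_nonneg hs hε.le, sq_nonneg s, sq_nonneg ε]

theorem inv_sqrt_remainder_nonneg {τ c E q : ℝ} (h0 : 0 ≤ τ) (c1 : -1 ≤ c) (c2 : c ≤ 1)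
    (hq : 0 ≤ q) (hq1 : q ^ 2 ≤ 1) (hE : 8 ≤ E) (r1 : 5 * τ ≤ E * q ^ 2)
    (r3 : 2 * τ ^ 2 ≤ E * q ^ 4) :
    0 ≤ -(15 / 8) * τ ^ 2 + 9 / 4 * (c * τ) * q ^ 2 - (3 / 8 - 7 / 2 * τ) * q ^ 4 -
      c * q ^ 6 / 2 + 4 * E * q ^ 4 := by
  have f1 : -τ ≤ c * τ := by nlinarith
  have f2 : q ^ 6 ≤ q ^ 4 :=
    pow_le_pow_of_le_one hq ((sq_le_one_iff₀ hq).1 hq1) (by norm_num)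
  have f3 : c * q ^ 6 ≤ 1 * q ^ 6 := mul_le_mul_of_nonneg_right c2 (by positivity)
  have f4 : -τ * q ^ 2 ≤ c * τ * q ^ 2 := mul_le_mul_of_nonneg_right f1 (by positivity)
  have f5 : 5 * τ * q ^ 2 ≤ E * q ^ 2 * q ^ 2 := mul_le_mul_of_nonneg_right r1 (by positivity)
  have f7 : 0 ≤ τ * q ^ 4 := by positivity
  have f9 : 0 ≤ q ^ 4 := by positivity
  have f8 : 8 * q ^ 4 ≤ E * q ^ 4 := mul_le_mul_of_nonneg_right hE (by positivity)
  linarith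

theorem inv_sqrt_quadratic_ge {u c E τ P Q Y V : ℝ} (hu0 : 0 ≤ u) (c1 : -1 ≤ c) (c2 : c ≤ 1)
    (h4 : τ ≤ 1 / 4) (hE : 8 ≤ E) (u1 : 5 * u ≤ E) (u2 : 2 * u ^ 2 ≤ E) (hEP : E ≤ P)
    (hPQ : P ≤ Q) :
    Y ^ 2 + P * V ^ 2 ≤ 2 * Y ^ 2 + 2 * Q * V ^ 2 + (u - c) * Y * V +
        (3 / 4 * u ^ 2 - 3 / 4 * (c * u) - τ) * V ^ 2 := by
  have a1 : (u - c) ^ 2 ≤ 2 * u ^ 2 + 2 := by nlinarith [sq_nonneg (u + c)]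
  have a3 : c * u ≤ u := by nlinarith
  have a4 : (-(3 / 4 * u) - 1 / 4) * V ^ 2 ≤ (3 / 4 * u ^ 2 - 3 / 4 * (c * u) - τ) * V ^ 2 :=
    mul_le_mul_of_nonneg_right (by nlinarith) (sq_nonneg V)
  have a5 : -(Y ^ 2 + (2 * u ^ 2 + 2) / 4 * V ^ 2) ≤ (u - c) * Y * V := by
    nlinarith [sq_nonneg (Y + (u - c) * V / 2), mul_le_mul_of_nonneg_right a1 (sq_nonneg V)]
  have a6 : 0 ≤ (2 * Q - (2 * u ^ 2 + 2) / 4 - 3 / 4 * u - 1 / 4 - P) * V ^ 2 :=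
    mul_nonneg (by linarith) (sq_nonneg V)
  linarith

theorem neg_le_virialOp_inv_sqrt {q p : ℝ} (h1 : 0 ≤ t₁) (h2 : t₁ + 2 * w ≤ 1) (hε : 0 < ε)
    (hεw : ε ≤ w) (hs : 0 ≤ s) (hsw : s ≤ w) (hE : 8 ≤ N ^ 2 * w * ε)
    (hτ : 4 * (t₁ * (1 - t₁)) ^ 2 ≤ N ^ 2 * w * ε * ε ^ 2) (hq : 0 < q) (hqs : q ^ 2 = s + ε)
    (hqp : q ≤ p) :
    -(2 * N ^ 2 * p) ≤ virialOp N t₁ (t₁ + 2 * w) (t₁ + s) (1 / q ^ 1) (-(1 / 2) / q ^ 3)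
      (3 / 4 / q ^ 5) (-(15 / 8) / q ^ 7) := by
  obtain ⟨r1, r2⟩ := edge_ratio h1 (by linarith) hε hs hE hτ
  have hm := mul_one_sub_le h1 hs
  have h0 : 0 ≤ (t₁ + s) * (1 - (t₁ + s)) := mul_nonneg (by linarith) (by linarith)
  have hc : |1 - 2 * (t₁ + s)| ≤ 1 := abs_le.2 ⟨by linarith, by linarith⟩
  obtain ⟨c1, c2⟩ := abs_le.1 hc
  have hτ1 : 0 ≤ t₁ * (1 - t₁) := mul_nonneg h1 (by linarith)
  have hq1 : q ^ 2 ≤ 1 := by linarith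
  have key : q ^ 7 * (virialOp N t₁ (t₁ + 2 * w) (t₁ + s) (1 / q ^ 1) (-(1 / 2) / q ^ 3)
      (3 / 4 / q ^ 5) (-(15 / 8) / q ^ 7) + 2 * N ^ 2 * q) =
      -(15 / 8) * ((t₁ + s) * (1 - (t₁ + s))) ^ 2 +
        9 / 4 * ((1 - 2 * (t₁ + s)) * ((t₁ + s) * (1 - (t₁ + s)))) * q ^ 2 -
        (3 / 8 - 7 / 2 * ((t₁ + s) * (1 - (t₁ + s)))) * q ^ 4 - (1 - 2 * (t₁ + s)) * q ^ 6 / 2 +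
        (4 * (N ^ 2 * w * ε) + 2 * N ^ 2 * (ε ^ 2 - q ^ 4)) * q ^ 4 + 2 * N ^ 2 * q ^ 8 := by
    unfold virialOp
    have : s = q ^ 2 - ε := by linarith
    field_simp
    rw [this]
    ring
  have e4 : q ^ 4 = (s + ε) ^ 2 := by rw [← hqs]; ring
  have pos : 0 ≤ q ^ 7 * (virialOp N t₁ (t₁ + 2 * w) (t₁ + s) (1 / q ^ 1) (-(1 / 2) / q ^ 3)
      (3 / 4 / q ^ 5) (-(15 / 8) / q ^ 7) + 2 * N ^ 2 * q) := by
    rw [key]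
    rw [← hqs] at r1 r2
    have r3 : 2 * ((t₁ + s) * (1 - (t₁ + s))) ^ 2 ≤ N ^ 2 * w * ε * q ^ 4 := by
      have := pow_le_pow_left₀ h0 hm 2
      nlinarith
    have f6 : 0 ≤ N ^ 2 * ε ^ 2 * q ^ 4 := by positivity
    have := inv_sqrt_remainder_nonneg h0 c1 c2 hq.le hq1 hE r1 r3
    linarith
  have := nonneg_of_mul_nonneg_right pos (pow_pos hq 7)
  nlinarith [sq_nonneg N]

/-- Upper bound at the midpoint for the quadratic form with weight `k = q⁻¹`. -/
theorem inv_sqrt_form_le {p T c D Y V : ℝ} (hw : 0 < w) (hp : 0 < p) (hT : w ≤ 2 * T)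
    (hc : |c| ≤ 1) (hwp : w ≤ p ^ 2) (hD : 172 ≤ D) (hN : D * T ^ 2 ≤ N ^ 2 * w ^ 4) :
    p * (2 * (1 / p ^ 1) * Y ^ 2 + 2 * (1 / p ^ 1) * (N ^ 2 * w * w) * V ^ 2 -
        2 * (T * (-(1 / 2) / p ^ 3) + c / 2 * (1 / p ^ 1)) * Y * V +
        T * (T * (3 / 4 / p ^ 5) + 3 / 2 * c * (-(1 / 2) / p ^ 3) - 1 / p ^ 1) * V ^ 2) ≤
      3 * (Y ^ 2 + N ^ 2 * w ^ 2 * V ^ 2) := by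
  have hT0 : 0 < T := by linarith
  set u := T / p ^ 2 with hu
  set z := T / w with hz
  have hu0 : 0 < u := by positivity
  have hz2 : 1 ≤ 2 * z := by
    rw [hz, ← mul_div_assoc, le_div_iff₀ hw]
    linarith
  have huz : u ≤ z := div_le_div_of_nonneg_left hT0.le hw hwp
  have hNz : 172 * z ^ 2 ≤ N ^ 2 * w ^ 2 := by
    rw [hz, div_pow, ← mul_div_assoc, div_le_iff₀ (by positivity)]
    have := mul_le_mul_of_nonneg_right hD (sq_nonneg T)
    linarith
  have : p * (2 * (1 / p ^ 1) * Y ^ 2 + 2 * (1 / p ^ 1) * (N ^ 2 * w * w) * V ^ 2 -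
        2 * (T * (-(1 / 2) / p ^ 3) + c / 2 * (1 / p ^ 1)) * Y * V +
        T * (T * (3 / 4 / p ^ 5) + 3 / 2 * c * (-(1 / 2) / p ^ 3) - 1 / p ^ 1) * V ^ 2) =
      2 * Y ^ 2 + 2 * (N ^ 2 * w ^ 2) * V ^ 2 + (u - c) * Y * V +
        (3 / 4 * u ^ 2 - 3 / 4 * (c * u) - T) * V ^ 2 := by
    rw [hu]
    field_simp
    ring
  rw [this]
  obtain ⟨c1, c2⟩ := abs_le.1 hc
  have a1 : (u - c) ^ 2 ≤ 9 * z ^ 2 := by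
    have := abs_le_of_sq_le_sq' (a := u - c) (b := 3 * z)
    nlinarith
  have a2 : u ^ 2 ≤ z ^ 2 := by nlinarith
  have a3 : -(c * u) ≤ 2 * z ^ 2 := by nlinarith
  have a4 : (3 / 4 * u ^ 2 - 3 / 4 * (c * u) - T) * V ^ 2 ≤ 9 / 4 * z ^ 2 * V ^ 2 :=
    mul_le_mul_of_nonneg_right (by linarith) (sq_nonneg V)
  have a5 : (u - c) * Y * V ≤ Y ^ 2 + 9 / 4 * z ^ 2 * V ^ 2 := by
    nlinarith [sq_nonneg (Y - (u - c) * V / 2), mul_le_mul_of_nonneg_right a1 (sq_nonneg V)]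
  have a6 := mul_le_mul_of_nonneg_right hNz (sq_nonneg V)
  nlinarith [mul_nonneg (sq_nonneg z) (sq_nonneg V)]

/-- Lower bound near the turning point for the quadratic form with weight `k = q⁻¹`. -/
theorem inv_sqrt_form_ge {q Y V : ℝ} (h1 : 0 ≤ t₁) (h2 : t₁ + 2 * w ≤ 1) (hε : 0 < ε)
    (hs : ε ≤ s) (hsw : s ≤ w) (hE : 8 ≤ N ^ 2 * w * ε)
    (hτ : 4 * (t₁ * (1 - t₁)) ^ 2 ≤ N ^ 2 * w * ε * ε ^ 2) (hq : 0 < q) (hqs : q ^ 2 = s + ε) :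
    Y ^ 2 + N ^ 2 * w * s * V ^ 2 ≤
      q * (2 * (1 / q ^ 1) * Y ^ 2 + 2 * (1 / q ^ 1) * (N ^ 2 * s * (2 * w - s)) * V ^ 2 -
        2 * ((t₁ + s) * (1 - (t₁ + s)) * (-(1 / 2) / q ^ 3) +
          (1 - 2 * (t₁ + s)) / 2 * (1 / q ^ 1)) * Y * V +
        (t₁ + s) * (1 - (t₁ + s)) * ((t₁ + s) * (1 - (t₁ + s)) * (3 / 4 / q ^ 5) +
          3 / 2 * (1 - 2 * (t₁ + s)) * (-(1 / 2) / q ^ 3) - 1 / q ^ 1) * V ^ 2) := by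
  have hs0 : 0 ≤ s := by linarith
  obtain ⟨r1, r2⟩ := edge_ratio h1 (by linarith) hε hs0 hE hτ
  have hm := mul_one_sub_le h1 hs0
  have h0 : 0 ≤ (t₁ + s) * (1 - (t₁ + s)) := mul_nonneg (by linarith) (by linarith)
  have h4 : (t₁ + s) * (1 - (t₁ + s)) ≤ 1 / 4 := by nlinarith [sq_nonneg (1 - 2 * (t₁ + s))]
  have hc : |1 - 2 * (t₁ + s)| ≤ 1 := abs_le.2 ⟨by linarith, by linarith⟩
  obtain ⟨c1, c2⟩ := abs_le.1 hc
  have r3 := pow_le_pow_left₀ h0 hm 2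
  have hEs : N ^ 2 * w * ε ≤ N ^ 2 * w * s :=
    mul_le_mul_of_nonneg_left hs (mul_nonneg (sq_nonneg N) (by linarith))
  have hR : N ^ 2 * w * s ≤ N ^ 2 * s * (2 * w - s) := by
    nlinarith [mul_nonneg (mul_nonneg (sq_nonneg N) hs0) (sub_nonneg.2 hsw)]
  generalize (t₁ + s) * (1 - (t₁ + s)) = τ at *
  generalize 1 - 2 * (t₁ + s) = c at *
  generalize N ^ 2 * w * ε = E at *
  rw [← hqs] at r1 r2
  set u := τ / q ^ 2 with hu
  have hu0 : 0 ≤ u := by positivity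
  have : q * (2 * (1 / q ^ 1) * Y ^ 2 + 2 * (1 / q ^ 1) * (N ^ 2 * s * (2 * w - s)) * V ^ 2 -
        2 * (τ * (-(1 / 2) / q ^ 3) + c / 2 * (1 / q ^ 1)) * Y * V +
        τ * (τ * (3 / 4 / q ^ 5) + 3 / 2 * c * (-(1 / 2) / q ^ 3) - 1 / q ^ 1) * V ^ 2) =
      2 * Y ^ 2 + 2 * (N ^ 2 * s * (2 * w - s)) * V ^ 2 + (u - c) * Y * V +
        (3 / 4 * u ^ 2 - 3 / 4 * (c * u) - τ) * V ^ 2 := by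
    rw [hu]
    field_simp
    ring
  rw [this]
  have u1 : 5 * u ≤ E := by
    rw [hu, ← mul_div_assoc, div_le_iff₀ (by positivity)]
    linarith
  have u2 : 2 * u ^ 2 ≤ E := by
    rw [hu, div_pow, ← mul_div_assoc, div_le_iff₀ (by positivity)]
    linarith
  exact inv_sqrt_quadratic_ge hu0 c1 c2 h4 hE u1 u2 hEs hR

end Edge

theorem IsTrigSturmSolution.energy_le {N t₁ w H D ε s θ₀ : ℝ} {v y G : ℝ → ℝ}
    (h : IsTrigSturmSolution N (N ^ 2 * t₁ * (t₁ + 2 * w))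
      (N ^ 2 * (1 - t₁) * (1 - (t₁ + 2 * w))) H v y G)
    (h1 : 0 < t₁) (hw : 0 < w) (h2 : t₁ + 2 * w < 1) (hD : 172 ≤ D)
    (hN : D * ((t₁ + w) * (1 - (t₁ + w))) ^ 2 ≤ N ^ 2 * w ^ 4)
    (hε : 0 < ε) (hs : ε ≤ s) (hsw : s ≤ w) (hE : 8 ≤ N ^ 2 * w * ε)
    (hτ : 4 * (t₁ * (1 - t₁)) ^ 2 ≤ N ^ 2 * w * ε * ε ^ 2)
    (hθ : θ₀ ∈ Set.Ioo 0 Real.pi) (hθt : sinSqHalf θ₀ = t₁ + s) :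
    (Real.sin θ₀ / 2 * y θ₀) ^ 2 + N ^ 2 * w * s * v θ₀ ^ 2 ≤
      53 * N ^ 2 * (√(w + ε) * √(s + ε)) * H * (Real.sin θ₀ / 2) := by
  have m1 := arccos_mem_Ioo (by linarith : 0 < t₁ + w) (by linarith)
  have e1 := sinSqHalf_arccos (by linarith : 0 ≤ t₁ + w) (by linarith)
  set θ₁ := Real.arccos (1 - 2 * (t₁ + w))
  have hmono := strictMonoOn_sinSqHalf.monotoneOn
  have hle : θ₀ ≤ θ₁ := by
    rw [← strictMonoOn_sinSqHalf.le_iff_le (Set.Ioo_subset_Icc_self hθ)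
      (Set.Ioo_subset_Icc_self m1), hθt, e1]
    linarith
  have hsub : Set.Icc θ₀ θ₁ ⊆ Set.Ioo 0 Real.pi := Set.Icc_subset_Ioo hθ.1 m1.2
  have hr : ∀ θ ∈ Set.Icc θ₀ θ₁, t₁ + s ≤ sinSqHalf θ ∧ sinSqHalf θ ≤ t₁ + w := fun θ hθ' => by
    rw [← hθt, ← e1]
    exact ⟨hmono (Set.Ioo_subset_Icc_self hθ) (Set.Ioo_subset_Icc_self (hsub hθ')) hθ'.1,
      hmono (Set.Ioo_subset_Icc_self (hsub hθ')) (Set.Ioo_subset_Icc_self m1) hθ'.2⟩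
  have hp2 : √(w + ε) ^ 2 = w + ε := Real.sq_sqrt (by linarith)
  have hp : 0 < √(w + ε) := Real.sqrt_pos.2 (by linarith)
  have hq2 : √(s + ε) ^ 2 = s + ε := Real.sq_sqrt (by linarith)
  have hq : 0 < √(s + ε) := Real.sqrt_pos.2 (by linarith)
  set p := √(w + ε) with hpd
  set q := √(s + ε) with hqd
  have hpos : ∀ θ ∈ Set.Icc θ₀ θ₁, 0 < sinSqHalf θ - (t₁ - ε) := fun θ hθ' => by
    linarith [(hr θ hθ').1]
  have hH : 0 ≤ H := (h.mass_nonneg _ hθ).trans (h.mass_le _ hθ)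
  have key := virialForm_le_add_of_le_virialOp (K := 2 * N ^ 2 * p) h hsub hle (by positivity)
    (k := fun t => 1 / √(t - (t₁ - ε)) ^ 1) (k₁ := fun t => -(1 / 2) / √(t - (t₁ - ε)) ^ 3)
    (k₂ := fun t => 3 / 4 / √(t - (t₁ - ε)) ^ 5) (k₃ := fun t => -(15 / 8) / √(t - (t₁ - ε)) ^ 7)
    (fun θ hθ' => (hasDerivAt_div_sqrt_pow 1 _ 0 (hpos θ hθ')).congr_deriv (by norm_num))
    (fun θ hθ' => (hasDerivAt_div_sqrt_pow (-(1 / 2)) _ 2 (hpos θ hθ')).congr_deriv (by norm_num))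
    (fun θ hθ' => (hasDerivAt_div_sqrt_pow (3 / 4) _ 4 (hpos θ hθ')).congr_deriv (by norm_num))
    (fun θ hθ' => by
      have := neg_le_virialOp_inv_sqrt (s := sinSqHalf θ - t₁) (p := p)
        (q := √(sinSqHalf θ - (t₁ - ε))) h1.le h2.le hε (by linarith) (by linarith [hr θ hθ'])
        (by linarith [hr θ hθ']) hE hτ (Real.sqrt_pos.2 (hpos θ hθ'))
        (by rw [Real.sq_sqrt (hpos θ hθ').le]; ring)
        (Real.sqrt_le_sqrt (by linarith [hr θ hθ']))
      rwa [add_sub_cancel] at this)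
  have r1 : 0 < Real.sin θ₁ / 2 := by have := Real.sin_pos_of_mem_Ioo m1; positivity
  have r0 : 0 < Real.sin θ₀ / 2 := by have := Real.sin_pos_of_mem_Ioo hθ; positivity
  have f1 := sin_mul_virialForm (N := N) (t₁ := t₁) (t₂ := t₁ + 2 * w)
    (fun t => 1 / √(t - (t₁ - ε)) ^ 1) (fun t => -(1 / 2) / √(t - (t₁ - ε)) ^ 3)
    (fun t => 3 / 4 / √(t - (t₁ - ε)) ^ 5) v y m1 e1 rfl rfl
  have f0 := sin_mul_virialForm (N := N) (t₁ := t₁) (t₂ := t₁ + 2 * w)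
    (fun t => 1 / √(t - (t₁ - ε)) ^ 1) (fun t => -(1 / 2) / √(t - (t₁ - ε)) ^ 3)
    (fun t => 3 / 4 / √(t - (t₁ - ε)) ^ 5) v y hθ hθt rfl rfl
  generalize virialForm N t₁ (t₁ + 2 * w) (fun t => 1 / √(t - (t₁ - ε)) ^ 1)
    (fun t => -(1 / 2) / √(t - (t₁ - ε)) ^ 3) (fun t => 3 / 4 / √(t - (t₁ - ε)) ^ 5) v y θ₁ = F₁
    at *
  generalize virialForm N t₁ (t₁ + 2 * w) (fun t => 1 / √(t - (t₁ - ε)) ^ 1)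
    (fun t => -(1 / 2) / √(t - (t₁ - ε)) ^ 3) (fun t => 3 / 4 / √(t - (t₁ - ε)) ^ 5) v y θ₀ = F₀
    at *
  simp only [show t₁ + w - t₁ = w by ring, show t₁ + 2 * w - (t₁ + w) = w by ring,
    show t₁ + w - (t₁ - ε) = w + ε by ring, ← hpd] at f1
  simp only [show t₁ + s - t₁ = s by ring, show t₁ + 2 * w - (t₁ + s) = 2 * w - s by ring,
    show t₁ + s - (t₁ - ε) = s + ε by ring, ← hqd] at f0
  have b1 := inv_sqrt_form_le (N := N) (p := p) (c := 1 - 2 * (t₁ + w))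
    (Y := Real.sin θ₁ / 2 * y θ₁) (V := v θ₁) hw hp (half_le_mid h1.le hw.le h2.le)
    (abs_le.2 ⟨by linarith, by linarith⟩) (by linarith) hD hN
  have b0 := inv_sqrt_form_ge (Y := Real.sin θ₀ / 2 * y θ₀) (V := v θ₀) h1.le h2.le hε hs hsw hE
    hτ hq hq2
  rw [← f1] at b1
  rw [← f0] at b0
  have b2 := h.mid_bound h1 hw h2 hD hN m1 e1
  have b3 : p * F₁ ≤ 51 * N ^ 2 * w * H := by
    refine le_of_mul_le_mul_left ?_ r1
    linarith only [b1, b2]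
  have b4 : F₁ ≤ 51 * N ^ 2 * p * H := by
    refine le_of_mul_le_mul_left (b3.trans ?_) hp
    have : w ≤ p ^ 2 := by linarith only [hp2, hε]
    have := mul_le_mul_of_nonneg_right this (mul_nonneg (sq_nonneg N) hH)
    linarith only [this]
  have b5 : F₀ ≤ 53 * N ^ 2 * p * H := by linarith only [key, b4]
  refine b0.trans ?_
  have := mul_le_mul_of_nonneg_left b5 (mul_pos hq r0).le
  linarith only [this]

/-- Growth bound for the energy `y² + μ² v²` where `|φ - μ²| ≤ μ²`. -/
theorem energy_growth {v y φ : ℝ → ℝ} {μ a b : ℝ} (hab : a ≤ b) (hμ : 0 ≤ μ)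
    (hv : ∀ x ∈ Set.Icc a b, HasDerivAt v (y x) x)
    (hy : ∀ x ∈ Set.Icc a b, HasDerivAt y (-(φ x * v x)) x)
    (hφ : ∀ x ∈ Set.Icc a b, 0 ≤ φ x ∧ φ x ≤ 2 * μ ^ 2) :
    y a ^ 2 + μ ^ 2 * v a ^ 2 ≤ Real.exp (μ * (b - a)) * (y b ^ 2 + μ ^ 2 * v b ^ 2) := by
  have key := le_of_hasDerivAt_nonneg
    (f := fun x => (y x ^ 2 + μ ^ 2 * v x ^ 2) * Real.exp (μ * (x - a))) hab
    (fun x hx => (((hy x hx).pow 2).add (((hv x hx).pow 2).const_mul (μ ^ 2))).mul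
      ((((hasDerivAt_id x).sub_const a).const_mul μ).exp))
    (fun x hx => by
      obtain ⟨p0, p1⟩ := hφ x hx
      have hE := Real.exp_pos (μ * (x - a))
      simp only [id, Pi.add_apply, Pi.pow_apply]
      norm_num
      have : 0 ≤ (-(2 * y x * (φ x * v x)) + μ ^ 2 * (2 * v x * y x)) +
          (y x ^ 2 + μ ^ 2 * v x ^ 2) * μ := by
        have hd : (μ ^ 2 - φ x) ^ 2 ≤ (μ ^ 2) ^ 2 := by nlinarith
        rcases hμ.eq_or_lt with rfl | hμ
        · have : φ x = 0 := by linarith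
          simp [this]
        · have := quadratic_nonneg (a := μ) (b := -(μ ^ 2 - φ x)) (c := μ ^ 3) hμ
            (by linarith) (y x) (v x)
          linarith
      have := mul_nonneg this hE.le
      linarith)
  simp only [sub_self, mul_zero, Real.exp_zero, mul_one] at key
  linarith

theorem fourth_power_le {w s T H K p q r V : ℝ} (hw : 0 < w) (hs : 0 < s) (hp : p ^ 2 ≤ 2 * w)
    (hq : q ^ 2 ≤ 2 * s) (hr : r ^ 2 ≤ T)
    (h : w * s * V ^ 2 ≤ K * (p * q) * H * r) : w * s * V ^ 4 ≤ 4 * K ^ 2 * T * H ^ 2 := by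
  have h0 : 0 ≤ w * s * V ^ 2 := by positivity
  have h1 := pow_le_pow_left₀ h0 h 2
  have h2 : p ^ 2 * q ^ 2 * r ^ 2 ≤ 2 * w * (2 * s) * T := by gcongr
  have h3 := mul_le_mul_of_nonneg_left h2 (by positivity : 0 ≤ K ^ 2 * H ^ 2)
  refine le_of_mul_le_mul_left ?_ (mul_pos hw hs)
  linarith

theorem sturm_potential_bounds {N t₁ w ε s : ℝ} (h1 : 0 < t₁) (hε : 0 < ε) (hεw : ε ≤ w)
    (h2 : t₁ + 2 * w < 1) (hs : 0 ≤ s) (hsε : s ≤ ε) :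
    0 ≤ N ^ 2 * s * (2 * w - s) / ((t₁ + s) * (1 - (t₁ + s))) ∧
      N ^ 2 * s * (2 * w - s) / ((t₁ + s) * (1 - (t₁ + s))) ≤
        2 * (N ^ 2 * w * ε / ((t₁ + ε) * (1 - (t₁ + ε)))) := by
  have a1 : 0 < (t₁ + s) * (1 - (t₁ + s)) := mul_pos (by linarith) (by linarith)
  have a2 : 0 < (t₁ + ε) * (1 - (t₁ + ε)) := mul_pos (by linarith) (by linarith)
  refine ⟨div_nonneg (mul_nonneg (by positivity) (by linarith)) a1.le, ?_⟩
  rw [← mul_div_assoc, div_le_div_iff₀ a1 a2]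
  have b1 : s * ((t₁ + ε) * (1 - (t₁ + ε))) ≤ ε * ((t₁ + s) * (1 - (t₁ + s))) := by
    nlinarith [mul_nonneg (sub_nonneg.2 hsε) (mul_nonneg h1.le (by linarith : 0 ≤ 1 - t₁)),
      mul_nonneg (sub_nonneg.2 hsε) (mul_nonneg hs hε.le)]
  have b2 := mul_le_mul_of_nonneg_left b1 (mul_nonneg (sq_nonneg N) (by linarith : 0 ≤ 2 * w))
  have b3 : 0 ≤ N ^ 2 * s ^ 2 * ((t₁ + ε) * (1 - (t₁ + ε))) := by positivity
  linarith

theorem IsTrigSturmSolution.fourth_power_le {N t₁ w H D C ε s θ₀ : ℝ} {v y G : ℝ → ℝ}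
    (h : IsTrigSturmSolution N (N ^ 2 * t₁ * (t₁ + 2 * w))
      (N ^ 2 * (1 - t₁) * (1 - (t₁ + 2 * w))) H v y G)
    (hN0 : 0 < N) (h1 : 0 < t₁) (hw : 0 < w) (h2 : t₁ + 2 * w < 1) (hD : 172 ≤ D)
    (hN : D * ((t₁ + w) * (1 - (t₁ + w))) ^ 2 ≤ N ^ 2 * w ^ 4)
    (hε : 0 < ε) (hεw : ε ≤ w) (hs : 0 ≤ s) (hsw : s ≤ w) (hE : 8 ≤ N ^ 2 * w * ε)
    (hC : 4 ≤ C) (hτ : C * (t₁ * (1 - t₁)) ^ 2 = N ^ 2 * w * ε * ε ^ 2)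
    (hθ : θ₀ ∈ Set.Ioo 0 Real.pi) (hθt : sinSqHalf θ₀ = t₁ + s) :
    w * ε * v θ₀ ^ 4 ≤
      4 * (53 * Real.exp (2 * √C)) ^ 2 * (t₁ * (1 - t₁) + ε) * H ^ 2 := by
  have hτ' : 4 * (t₁ * (1 - t₁)) ^ 2 ≤ N ^ 2 * w * ε * ε ^ 2 := by
    rw [← hτ]
    exact mul_le_mul_of_nonneg_right hC (sq_nonneg _)
  have hN2 : 0 < N ^ 2 := by positivity
  have hp : √(w + ε) ^ 2 ≤ 2 * w := by
    rw [Real.sq_sqrt (by linarith)]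
    linarith
  have hT1 : 0 < t₁ * (1 - t₁) := mul_pos h1 (by linarith)
  rcases le_total ε s with hεs | hsε
  · have hs0 : 0 < s := by linarith
    have a := h.energy_le h1 hw h2 hD hN hε hεs hsw hE hτ' hθ hθt
    have b : w * s * v θ₀ ^ 2 ≤ 53 * (√(w + ε) * √(s + ε)) * H * (Real.sin θ₀ / 2) := by
      refine le_of_mul_le_mul_left ?_ hN2
      nlinarith [sq_nonneg (Real.sin θ₀ / 2 * y θ₀)]
    have hr : (Real.sin θ₀ / 2) ^ 2 ≤ t₁ * (1 - t₁) + s := by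
      rw [sin_div_two_sq, hθt]
      exact mul_one_sub_le h1.le hs
    have c := _root_.fourth_power_le hw hs0 hp (by rw [Real.sq_sqrt (by linarith)]; linarith) hr b
    have d : (t₁ * (1 - t₁) + s) * ε ≤ (t₁ * (1 - t₁) + ε) * s := by nlinarith
    have e : 1 ≤ Real.exp (2 * √C) ^ 2 := one_le_pow₀ (Real.one_le_exp (by positivity))
    have f := mul_le_mul_of_nonneg_left d (by positivity : 0 ≤ 4 * 53 ^ 2 * H ^ 2)
    have g := mul_le_mul_of_nonneg_right c hε.le
    have i := mul_le_mul_of_nonneg_right e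
      (by positivity : 0 ≤ 4 * 53 ^ 2 * H ^ 2 * ((t₁ * (1 - t₁) + ε) * s))
    refine le_of_mul_le_mul_left ?_ hs0
    linarith
  · have m1 := arccos_mem_Ioo (by linarith : 0 < t₁ + ε) (by linarith)
    have e1 := sinSqHalf_arccos (by linarith : 0 ≤ t₁ + ε) (by linarith)
    set θ₁ := Real.arccos (1 - 2 * (t₁ + ε))
    have hmono := strictMonoOn_sinSqHalf.monotoneOn
    have hle : θ₀ ≤ θ₁ := by
      rw [← strictMonoOn_sinSqHalf.le_iff_le (Set.Ioo_subset_Icc_self hθ)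
        (Set.Ioo_subset_Icc_self m1), hθt, e1]
      linarith
    have hsub : Set.Icc θ₀ θ₁ ⊆ Set.Ioo 0 Real.pi := Set.Icc_subset_Ioo hθ.1 m1.2
    have hr : ∀ θ ∈ Set.Icc θ₀ θ₁, t₁ + s ≤ sinSqHalf θ ∧ sinSqHalf θ ≤ t₁ + ε :=
      fun θ hθ' => by
        rw [← hθt, ← e1]
        exact ⟨hmono (Set.Ioo_subset_Icc_self hθ) (Set.Ioo_subset_Icc_self (hsub hθ')) hθ'.1,
          hmono (Set.Ioo_subset_Icc_self (hsub hθ')) (Set.Ioo_subset_Icc_self m1) hθ'.2⟩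
    set Tε := (t₁ + ε) * (1 - (t₁ + ε)) with hTε
    have hTε0 : 0 < Tε := mul_pos (by linarith) (by linarith)
    set μ := √(N ^ 2 * w * ε / Tε) with hμ
    have hμ2 : μ ^ 2 = N ^ 2 * w * ε / Tε := Real.sq_sqrt (by positivity)
    have grow := energy_growth (v := v) (y := y)
      (φ := fun θ => N ^ 2 * (sinSqHalf θ - t₁) * (2 * w - (sinSqHalf θ - t₁)) /
        (sinSqHalf θ * (1 - sinSqHalf θ))) hle (Real.sqrt_nonneg _ : 0 ≤ μ)
      (fun θ hθ' => h.hasDerivAt θ (hsub hθ'))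
      (fun θ hθ' => (h.hasDerivAt_deriv θ (hsub hθ')).congr_deriv (by
        obtain ⟨q0, q1⟩ := sinSqHalf_mem_Ioo (hsub hθ')
        rw [sturm_potential_eq q0 q1]
        ring))
      (fun θ hθ' => by
        obtain ⟨q0, q1⟩ := hr θ hθ'
        have := sturm_potential_bounds (N := N) (s := sinSqHalf θ - t₁) h1 hε hεw h2 (by linarith)
          (by linarith)
        rw [add_sub_cancel] at this
        rwa [hμ2])
    have hlow : ∀ t, t₁ ≤ t → t ≤ t₁ + ε → t₁ * (1 - t₁) / 2 ≤ t * (1 - t) := fun t q0 q1 => by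
      nlinarith
    have hlen : (θ₁ - θ₀) ^ 2 * (t₁ * (1 - t₁) / 2) ≤ ε ^ 2 := by
      have hρ : 0 ≤ √(t₁ * (1 - t₁) / 2) := Real.sqrt_nonneg _
      have := le_of_hasDerivAt_nonneg (f := fun θ => sinSqHalf θ - √(t₁ * (1 - t₁) / 2) * θ) hle
        (fun θ hθ' => (hasDerivAt_sinSqHalf θ).sub
          ((hasDerivAt_id θ).const_mul (√(t₁ * (1 - t₁) / 2)))) (fun θ hθ' => by
          obtain ⟨q0, q1⟩ := hr θ hθ'
          have : √(t₁ * (1 - t₁) / 2) ≤ Real.sin θ / 2 := by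
            rw [Real.sqrt_le_iff, sin_div_two_sq]
            exact ⟨by have := Real.sin_pos_of_mem_Ioo (hsub hθ'); positivity,
              hlow _ (by linarith) q1⟩
          linarith)
      simp only [e1, hθt] at this
      have h3 : √(t₁ * (1 - t₁) / 2) * (θ₁ - θ₀) ≤ ε := by linarith
      have := pow_le_pow_left₀ (mul_nonneg hρ (sub_nonneg.2 hle)) h3 2
      rw [mul_pow, Real.sq_sqrt (by positivity)] at this
      linarith
    have hX : μ * (θ₁ - θ₀) ≤ 2 * √C := by
      refine (pow_le_pow_iff_left₀ (mul_nonneg (Real.sqrt_nonneg _) (sub_nonneg.2 hle))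
        (by positivity) two_ne_zero).1 ?_
      rw [mul_pow, mul_pow, hμ2, Real.sq_sqrt (by linarith), div_mul_eq_mul_div,
        div_le_iff₀ hTε0]
      have l1 := hlow (t₁ + ε) (by linarith) le_rfl
      have l2 := mul_le_mul_of_nonneg_left hlen (by positivity : 0 ≤ N ^ 2 * w * ε)
      refine le_of_mul_le_mul_right ?_ (half_pos hT1)
      have l3 := mul_le_mul_of_nonneg_left l1 (by positivity : 0 ≤ 2 * C * (t₁ * (1 - t₁)))
      linarith
    have a := h.energy_le h1 hw h2 hD hN hε le_rfl hεw hE hτ' m1 e1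
    have hb : N ^ 2 * w * ε * v θ₀ ^ 2 ≤ Real.exp (2 * √C) *
        ((Real.sin θ₁ / 2 * y θ₁) ^ 2 + N ^ 2 * w * ε * v θ₁ ^ 2) := by
      have b1 : μ ^ 2 * v θ₀ ^ 2 ≤ Real.exp (2 * √C) * (y θ₁ ^ 2 + μ ^ 2 * v θ₁ ^ 2) :=
        (le_add_of_nonneg_left (sq_nonneg _)).trans
          (grow.trans (mul_le_mul_of_nonneg_right (Real.exp_le_exp.2 hX) (by positivity)))
      have b2 := mul_le_mul_of_nonneg_right b1 hTε0.le
      have b3 : μ ^ 2 * Tε = N ^ 2 * w * ε := by rw [hμ2, div_mul_cancel₀ _ hTε0.ne']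
      rw [mul_pow, sin_div_two_sq, e1, ← hTε, ← b3]
      linarith
    have b : w * ε * v θ₀ ^ 2 ≤
        53 * Real.exp (2 * √C) * (√(w + ε) * √(ε + ε)) * H * (Real.sin θ₁ / 2) := by
      refine le_of_mul_le_mul_left ?_ hN2
      have := mul_le_mul_of_nonneg_left a (Real.exp_pos (2 * √C)).le
      linarith
    exact _root_.fourth_power_le hw hε hp (by rw [Real.sq_sqrt (by linarith)]; linarith)
      (by rw [sin_div_two_sq, e1]; exact mul_one_sub_le h1.le hε.le) b

theorem exists_twelfth_power_le {c : ℝ} (hc : 0 < c) : ∃ C D : ℝ, 0 < C ∧ 0 < D ∧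
    ∀ (N t₁ w H : ℝ) (v y G : ℝ → ℝ), 0 < N → 0 < t₁ → 0 < w → t₁ + 2 * w < 1 →
      IsTrigSturmSolution N (N ^ 2 * t₁ * (t₁ + 2 * w))
        (N ^ 2 * (1 - t₁) * (1 - (t₁ + 2 * w))) H v y G →
      c ≤ N ^ 2 * w * (t₁ * (1 - t₁)) →
      D * ((t₁ + w) * (1 - (t₁ + w))) ^ 2 ≤ N ^ 2 * w ^ 4 →
      ∀ θ ∈ Set.Ioo 0 Real.pi, t₁ ≤ sinSqHalf θ → sinSqHalf θ ≤ t₁ + w →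
        v θ ^ 12 ≤ C * (N ^ 2 * (t₁ * (1 - t₁)) / w ^ 2) * H ^ 6 := by
  set A := 512 / c ^ 2 + 4 with hA
  have hA4 : 4 ≤ A := by
    rw [hA]
    have : 0 < 512 / c ^ 2 := by positivity
    linarith
  have hAc : 512 ≤ A * c ^ 2 := by
    rw [hA, add_mul, div_mul_cancel₀ _ (by positivity)]
    nlinarith [sq_nonneg c]
  have hA0 : 0 < A := by linarith
  set K := 53 * Real.exp (2 * √A) with hK
  refine ⟨256 * K ^ 6 * (1 / A + 1 / c), 172 + 4 * A, by positivity, by positivity, ?_⟩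
  intro N t₁ w H v y G hN h1 hw h2 h hcN hD θ hθ hθ1 hθ2
  have hT : 0 < t₁ * (1 - t₁) := mul_pos h1 (by linarith)
  have hTm : t₁ * (1 - t₁) ≤ 2 * ((t₁ + w) * (1 - (t₁ + w))) := by nlinarith
  obtain ⟨ε, hε, hε3⟩ : ∃ ε : ℝ, 0 < ε ∧ ε ^ 3 = A * (t₁ * (1 - t₁)) ^ 2 / (N ^ 2 * w) := by
    refine ⟨(A * (t₁ * (1 - t₁)) ^ 2 / (N ^ 2 * w)) ^ ((1 : ℝ) / 3), by positivity, ?_⟩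
    rw [← Real.rpow_natCast, ← Real.rpow_mul (by positivity)]
    norm_num
  set T := t₁ * (1 - t₁) with hTdef
  set M := (t₁ + w) * (1 - (t₁ + w)) with hM
  rw [eq_div_iff (by positivity)] at hε3
  have hεw : ε ≤ w := by
    refine (pow_le_pow_iff_left₀ hε.le hw.le three_ne_zero).1 ?_
    refine le_of_mul_le_mul_right ?_ (by positivity : 0 < N ^ 2 * w)
    rw [hε3]
    have : A * T ^ 2 ≤ A * (4 * M ^ 2) := mul_le_mul_of_nonneg_left (by nlinarith) hA0.le
    nlinarith [sq_nonneg M]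
  have hE : 8 ≤ N ^ 2 * w * ε := by
    refine (pow_le_pow_iff_left₀ (by norm_num) (by positivity) three_ne_zero).1 ?_
    have e1 : (N ^ 2 * w * ε) ^ 3 = A * (N ^ 2 * w * T) ^ 2 := by
      linear_combination (N ^ 2 * w) ^ 2 * hε3
    have e2 := mul_le_mul_of_nonneg_left (pow_le_pow_left₀ hc.le hcN 2) hA0.le
    rw [e1]
    linarith
  have key := h.fourth_power_le (s := sinSqHalf θ - t₁) (C := A) (ε := ε) hN h1 hw h2
    (by linarith : 172 ≤ 172 + 4 * A) hD hε hεw (by linarith) (by linarith) hE hA4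
    (by rw [← hTdef]; linarith) hθ (by ring)
  rw [← hK, ← hTdef] at key
  have k3 := pow_le_pow_left₀ (by positivity) key 3
  have hcube : (T + ε) ^ 3 ≤ 4 * (T ^ 3 + ε ^ 3) := by
    nlinarith [mul_nonneg (add_pos hT hε).le (sq_nonneg (T - ε))]
  have k4 : w ^ 3 * ε ^ 3 * v θ ^ 12 ≤ 256 * K ^ 6 * (T ^ 3 + ε ^ 3) * H ^ 6 := by
    have := mul_le_mul_of_nonneg_left hcube (by positivity : 0 ≤ 64 * K ^ 6 * H ^ 6)
    linarith
  have k5 : N ^ 2 * ε ^ 3 ≤ A * T ^ 3 * N ^ 2 / c := by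
    rw [le_div_iff₀ hc]
    have := mul_le_mul_of_nonneg_left hcN (by positivity : 0 ≤ N ^ 2 * ε ^ 3)
    have e1 : N ^ 2 * ε ^ 3 * (N ^ 2 * w * T) = A * T ^ 3 * N ^ 2 := by
      linear_combination (N ^ 2 * T) * hε3
    linarith
  have k6 : A * T ^ 2 * w ^ 2 * v θ ^ 12 ≤
      256 * K ^ 6 * (N ^ 2 * T ^ 3 + A * T ^ 3 * N ^ 2 / c) * H ^ 6 := by
    have e1 := mul_le_mul_of_nonneg_left k4 (sq_nonneg N)
    have e2 := mul_le_mul_of_nonneg_left k5 (by positivity : 0 ≤ 256 * K ^ 6 * H ^ 6)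
    have e3 : N ^ 2 * (w ^ 3 * ε ^ 3 * v θ ^ 12) = A * T ^ 2 * w ^ 2 * v θ ^ 12 := by
      linear_combination (w ^ 2 * v θ ^ 12) * hε3
    linarith
  refine le_of_mul_le_mul_left (k6.trans_eq ?_) (by positivity : 0 < A * T ^ 2 * w ^ 2)
  field_simp

theorem turning_points_exist {n a b N : ℝ} (hn : 1 ≤ n) (ha : 3 / 5 ≤ a) (hb : 3 / 5 ≤ b)
    (hN : N = n + (a + b + 1) / 2) :
    ∃ t₁ w : ℝ, 0 < t₁ ∧ 0 < w ∧ t₁ + 2 * w < 1 ∧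
      N ^ 2 * t₁ * (t₁ + 2 * w) = (a ^ 2 - 1 / 4) / 4 ∧
      N ^ 2 * (1 - t₁) * (1 - (t₁ + 2 * w)) = (b ^ 2 - 1 / 4) / 4 ∧
      n * (n + a) * (n + b) * (n + a + b) ≤ 4 * N ^ 4 * w ^ 2 ∧
      (n + a) * (n + a + b) ≤ 4 * N ^ 2 * (t₁ + w) ∧
      2 * N ^ 2 * (t₁ + w) ≤ 3 * (n + a) * (n + a + b) ∧
      (n + b) * (n + a + b) ≤ 4 * N ^ 2 * (1 - (t₁ + w)) ∧
      2 * N ^ 2 * (1 - (t₁ + w)) ≤ 3 * (n + b) * (n + a + b) := by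
  have hN0 : 0 < N := by linarith
  have hab : 0 < a * b := by positivity
  have hna : 0 < n * a := by positivity
  have hnb : 0 < n * b := by positivity
  have i1 : 3 / 5 * n ≤ n * a := by nlinarith
  have i2 : 3 / 5 * n ≤ n * b := by nlinarith
  have i3 : 3 / 5 * a ≤ a ^ 2 := by nlinarith
  have i4 : 3 / 5 * b ≤ b ^ 2 := by nlinarith
  have i5 : 3 / 5 * a ≤ a * b := by nlinarith
  have i6 : 3 / 5 * b ≤ a * b := by nlinarith
  have i7 : 0 ≤ n ^ 2 := sq_nonneg n
  obtain ⟨A, hA⟩ : ∃ A, A = (a ^ 2 - 1 / 4) / 4 := ⟨_, rfl⟩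
  obtain ⟨B, hB⟩ : ∃ B, B = (b ^ 2 - 1 / 4) / 4 := ⟨_, rfl⟩
  have hA0 : 0 < A := by rw [hA]; nlinarith
  have hB0 : 0 < B := by rw [hB]; nlinarith
  have hNN : 0 < N ^ 2 := by positivity
  have hU : N ^ 2 - A - B - a * b / 2 ≥ n * (n + a + b) := by rw [hN, hA, hB]; linarith
  have hU' : N ^ 2 - A - B + a * b / 2 ≥ (n + a) * (n + b) := by rw [hN, hA, hB]; linarith
  have hAB : 4 * (A * B) ≤ (a * b / 2) ^ 2 := by
    have : A * B ≤ (a ^ 2 / 4) * (b ^ 2 / 4) :=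
      mul_le_mul (by rw [hA]; linarith) (by rw [hB]; linarith) hB0.le (by positivity)
    linarith
  set d := (N ^ 2 + A - B) ^ 2 - 4 * N ^ 2 * A with hd
  have hd1 : n * (n + a) * (n + b) * (n + a + b) ≤ d := by
    have := mul_le_mul hU hU' (by positivity) (by
      refine le_trans ?_ hU
      positivity)
    rw [hd]
    linarith
  have hd0 : 0 < d := lt_of_lt_of_le (by positivity) hd1
  have hS2 : √d ^ 2 = d := Real.sq_sqrt hd0.le
  have hS : 0 < √d := Real.sqrt_pos.2 hd0
  set S := √d
  have hp : 0 < N ^ 2 + A - B := by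
    have : 0 ≤ n * (n + a + b) := by positivity
    linarith
  have hp' : 0 < N ^ 2 - A + B := by
    have : 0 ≤ n * (n + a + b) := by positivity
    linarith
  have hSp : S < N ^ 2 + A - B := by
    refine (pow_lt_pow_iff_left₀ hS.le hp.le two_ne_zero).1 ?_
    rw [hS2, hd]
    have : 0 < N ^ 2 * A := by positivity
    linarith
  have hSp' : S < N ^ 2 - A + B := by
    refine (pow_lt_pow_iff_left₀ hS.le hp'.le two_ne_zero).1 ?_
    rw [hS2, hd]
    have : 0 < N ^ 2 * B := by positivity
    linarith
  have em : (N ^ 2 + A - B - S) / (2 * N ^ 2) + S / (2 * N ^ 2) =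
      (N ^ 2 + A - B) / (2 * N ^ 2) := by ring
  have em1 : 2 * N ^ 2 * ((N ^ 2 + A - B) / (2 * N ^ 2)) = N ^ 2 + A - B := by field_simp
  rw [← hA, ← hB]
  refine ⟨(N ^ 2 + A - B - S) / (2 * N ^ 2), S / (2 * N ^ 2), div_pos (by linarith) (by positivity),
    by positivity, ?_, ?_, ?_, ?_, ?_, ?_, ?_, ?_⟩
  · have : (N ^ 2 + A - B - S) / (2 * N ^ 2) + 2 * (S / (2 * N ^ 2)) =
        (N ^ 2 + A - B + S) / (2 * N ^ 2) := by ring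
    rw [this, div_lt_one (by positivity)]
    linarith
  · field_simp
    rw [hd] at hS2
    linear_combination -hS2
  · field_simp
    rw [hd] at hS2
    linear_combination -hS2
  · have : 4 * N ^ 4 * (S / (2 * N ^ 2)) ^ 2 = S ^ 2 := by
      field_simp
      norm_num
    rwa [this, hS2]
  · rw [em]
    have : (n + a) * (n + a + b) ≤ 2 * (N ^ 2 + A - B) := by rw [hN, hA, hB]; linarith
    linarith
  · rw [em, em1, hN, hA, hB]
    linarith
  · rw [em]
    have : (n + b) * (n + a + b) ≤ 2 * (N ^ 2 - A + B) := by rw [hN, hA, hB]; linarith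
    linarith
  · rw [em]
    have : N ^ 2 - A + B ≤ 3 * (n + b) * (n + a + b) := by rw [hN, hA, hB]; linarith
    linarith

theorem turning_points_bounds {n a b N M t₁ w : ℝ} (hn : 1 ≤ n) (ha : 3 / 5 ≤ a)
    (hb : 3 / 5 ≤ b) (hN : N = n + (a + b + 1) / 2) (haM : a ≤ M) (hbM : b ≤ M)
    (h0 : 0 < t₁) (hw : 0 < w) (h2 : t₁ + 2 * w < 1)
    (hA : N ^ 2 * t₁ * (t₁ + 2 * w) = (a ^ 2 - 1 / 4) / 4)
    (hd : n * (n + a) * (n + b) * (n + a + b) ≤ 4 * N ^ 4 * w ^ 2)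
    (hp : (n + a) * (n + a + b) ≤ 4 * N ^ 2 * (t₁ + w))
    (hp3 : 2 * N ^ 2 * (t₁ + w) ≤ 3 * (n + a) * (n + a + b))
    (hq : (n + b) * (n + a + b) ≤ 4 * N ^ 2 * (1 - (t₁ + w)))
    (hq3 : 2 * N ^ 2 * (1 - (t₁ + w)) ≤ 3 * (n + b) * (n + a + b)) :
    1 / 10000 ≤ N ^ 2 * w * (t₁ * (1 - t₁)) ∧
      (n / 18) ^ 2 * ((t₁ + w) * (1 - (t₁ + w))) ^ 2 ≤ N ^ 2 * w ^ 4 ∧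
      N ^ 2 * (t₁ * (1 - t₁)) / w ^ 2 ≤ 96 * (M ^ 2 * (1 + M / n)) := by
  have hN0 : 0 < N := by linarith
  have hna : 0 < n + a := by linarith
  have hnb : 0 < n + b := by linarith
  have hn0 : 0 < n := by linarith
  have ha0 : 0 < a := by linarith
  have hb0 : 0 < b := by linarith
  have hZN : n + a + b ≤ 2 * N := by linarith
  have hNZ : N ≤ n + a + b := by linarith
  set Z := n + a + b with hZ
  have hZ0 : 0 < Z := by linarith
  have ht1 : 0 < 1 - t₁ := by linarith
  have hNN : 0 < N ^ 2 := by positivity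
  have ht2 : 0 < t₁ + 2 * w := by linarith
  have x6 : N ^ 4 ≤ Z ^ 4 := pow_le_pow_left₀ hN0.le hNZ 4
  have x7 : n * (n + a) * (n + b) ≤ 4 * Z ^ 3 * w ^ 2 := by
    refine le_of_mul_le_mul_right (hd.trans ?_) hZ0
    have := mul_le_mul_of_nonneg_right x6 (sq_nonneg w)
    linarith only [this]
  refine ⟨?_, ?_, ?_⟩
  · set X := N ^ 2 * w * (t₁ * (1 - t₁)) with hX
    have hX0 : 0 < X := by positivity
    have x1 : (7 / 100 * a ^ 2) * ((n + b) * Z) * w ≤ X * (12 * (n + a) * Z) := by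
      have e1 : X * (t₁ + 2 * w) = (a ^ 2 - 1 / 4) / 4 * (1 - t₁) * w := by
        rw [← hA, hX]
        ring
      have e2 : 7 / 100 * a ^ 2 ≤ (a ^ 2 - 1 / 4) / 4 := by nlinarith
      have e0 : 0 ≤ (a ^ 2 - 1 / 4) / 4 := le_trans (by positivity) e2
      have e3 : (n + b) * Z ≤ 4 * N ^ 2 * (1 - t₁) := by
        have : N ^ 2 * (1 - (t₁ + w)) ≤ N ^ 2 * (1 - t₁) :=
          mul_le_mul_of_nonneg_left (by linarith) hNN.le
        linarith
      have e4 : N ^ 2 * (t₁ + 2 * w) ≤ 3 * (n + a) * Z := by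
        have : N ^ 2 * (t₁ + 2 * w) ≤ N ^ 2 * (2 * (t₁ + w)) :=
          mul_le_mul_of_nonneg_left (by linarith) hNN.le
        linarith
      calc (7 / 100 * a ^ 2) * ((n + b) * Z) * w
          ≤ ((a ^ 2 - 1 / 4) / 4) * (4 * N ^ 2 * (1 - t₁)) * w := by gcongr
        _ = X * (4 * (N ^ 2 * (t₁ + 2 * w))) := by linear_combination (-(4 * N ^ 2)) * e1
        _ ≤ X * (12 * (n + a) * Z) := mul_le_mul_of_nonneg_left (by linarith) hX0.le
    have x2 : (7 / 100 * a ^ 2) * (n + b) * w ≤ X * (12 * (n + a)) := by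
      refine le_of_mul_le_mul_right ?_ hZ0
      linarith
    have x3 := pow_le_pow_left₀ (by positivity) x2 2
    have x4 : Z ≤ 8 / 3 * a * (n + b) := by
      nlinarith only [hZ, mul_le_mul_of_nonneg_right ha hnb.le, hn, hb, ha]
    have x5 : n + a ≤ 8 / 3 * a * n := by nlinarith only [hn, ha]
    have x8 : Z ^ 3 ≤ (8 / 3 * a * (n + b)) ^ 3 := pow_le_pow_left₀ hZ0.le x4 3
    have x9 : n * (n + a) * (n + b) ≤ 4 * (8 / 3 * a * (n + b)) ^ 3 * w ^ 2 :=
      x7.trans (by gcongr)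
    have x10 : n * (n + a) ≤ 4 * (8 / 3) ^ 3 * a ^ 3 * (n + b) ^ 2 * w ^ 2 := by
      refine le_of_mul_le_mul_right ?_ hnb
      linarith
    have x11 : (7 / 100) ^ 2 * a * (n * (n + a)) ≤
        4 * (8 / 3) ^ 3 * (X ^ 2 * (12 * (n + a)) ^ 2) := by
      have := mul_le_mul_of_nonneg_left x10 (by positivity : 0 ≤ (7 / 100) ^ 2 * a)
      linarith
    have x12 : (7 / 100) ^ 2 * (a * n) ≤ 4 * (8 / 3) ^ 3 * 144 * X ^ 2 * (n + a) := by
      refine le_of_mul_le_mul_right ?_ hna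
      linarith
    have x13 : (7 / 100) ^ 2 * (a * n) ≤ 4 * (8 / 3) ^ 3 * 144 * X ^ 2 * (8 / 3 * a * n) :=
      x12.trans (by gcongr)
    have x14 : (7 / 100) ^ 2 ≤ 4 * (8 / 3) ^ 4 * 144 * X ^ 2 := by
      refine le_of_mul_le_mul_right ?_ (mul_pos ha0 hn0)
      linarith
    by_contra! hlt
    have := pow_lt_pow_left₀ hlt hX0.le two_ne_zero
    linarith
  · rw [← mul_pow, show N ^ 2 * w ^ 4 = (N * w ^ 2) ^ 2 by ring]
    have hm : 0 ≤ 1 - (t₁ + w) := by linarith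
    refine pow_le_pow_left₀ (by positivity) ?_ 2
    have e1 := mul_le_mul hp3 hq3 (by positivity) (by positivity)
    have e2 := mul_le_mul_of_nonneg_left hd hN0.le
    have e3 : 0 ≤ n * (n + a) * (n + b) * Z := by positivity
    have e4 := mul_le_mul_of_nonneg_right hZN e3
    refine le_of_mul_le_mul_left ?_ (by positivity : 0 < 4 * N ^ 4)
    have e5 := mul_le_mul_of_nonneg_left e1 (by positivity : 0 ≤ n / 18)
    linarith
  · rw [div_le_iff₀ (by positivity)]
    have e1 : N ^ 2 * (1 - t₁) ≤ 3 * (n + b) * Z := by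
      have : N ^ 2 * (1 - t₁) ≤ N ^ 2 * (2 * (1 - (t₁ + w))) :=
        mul_le_mul_of_nonneg_left (by linarith) hNN.le
      linarith
    have e2 : (n + a) * Z ≤ 4 * N ^ 2 * (t₁ + 2 * w) := by
      have : N ^ 2 * (t₁ + w) ≤ N ^ 2 * (t₁ + 2 * w) :=
        mul_le_mul_of_nonneg_left (by linarith) hNN.le
      linarith
    have e3 : t₁ * ((n + a) * Z) ≤ a ^ 2 := by
      have := mul_le_mul_of_nonneg_left e2 h0.le
      linarith
    have e4 : N ^ 2 * (t₁ * (1 - t₁)) * (n + a) ≤ 3 * (n + b) * a ^ 2 := by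
      have f1 := mul_le_mul_of_nonneg_left e1 (by positivity : 0 ≤ t₁ * (n + a))
      have f2 := mul_le_mul_of_nonneg_left e3 (by positivity : 0 ≤ 3 * (n + b))
      linarith
    have e5 : a * Z ≤ 2 * M * (n + a) := by
      have g1 := mul_le_mul_of_nonneg_left haM hn0.le
      have g2 := mul_le_mul_of_nonneg_left haM ha0.le
      have g3 := mul_le_mul_of_nonneg_left hbM ha0.le
      have g4 := mul_pos ha0 hn0
      rw [hZ]
      linarith only [g1, g2, g3, g4]
    have e6 : Z ≤ 2 * (1 + M / n) * n := by
      have : (1 + M / n) * n = n + M := by field_simp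
      linarith
    have e7 : (a * Z) ^ 2 * Z ≤ (2 * M * (n + a)) ^ 2 * (2 * (1 + M / n) * n) := by gcongr
    have f1 := mul_le_mul_of_nonneg_left x7 (by positivity : 0 ≤ 3 * a ^ 2)
    have f2 := mul_le_mul_of_nonneg_left e4 (by positivity : 0 ≤ n * (n + a))
    have f3 := mul_le_mul_of_nonneg_left e7 (by positivity : 0 ≤ 12 * w ^ 2)
    refine le_of_mul_le_mul_left ?_ (by positivity : 0 < n * (n + a) ^ 2)
    linarith

theorem IsTrigSturmSolution.exists_critical_max {N A B H : ℝ} {v y G : ℝ → ℝ}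
    (h : IsTrigSturmSolution N A B H v y G) (hv : ContinuousOn v (Set.Icc 0 Real.pi))
    (h0 : v 0 = 0) (hπ : v Real.pi = 0) :
    ∃ θ₀ ∈ Set.Ioo 0 Real.pi, v θ₀ * y θ₀ = 0 ∧ ∀ θ ∈ Set.Icc 0 Real.pi, v θ ^ 2 ≤ v θ₀ ^ 2 := by
  obtain ⟨θ₁, hθ₁, hmax⟩ := isCompact_Icc.exists_isMaxOn
    (Set.nonempty_Icc.2 Real.pi_pos.le) (hv.pow 2)
  have hmax' : ∀ θ ∈ Set.Icc 0 Real.pi, v θ ^ 2 ≤ v θ₁ ^ 2 := fun θ hθ => hmax hθ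
  by_cases hz : v θ₁ = 0
  · have hm : Real.pi / 2 ∈ Set.Ioo 0 Real.pi := ⟨by positivity, by linarith [Real.pi_pos]⟩
    have hall : ∀ θ ∈ Set.Icc 0 Real.pi, v θ = 0 := fun θ hθ => by
      have := hmax' θ hθ
      rw [hz] at this
      nlinarith
    refine ⟨Real.pi / 2, hm, by rw [hall _ (Set.Ioo_subset_Icc_self hm), zero_mul], fun θ hθ => ?_⟩
    rw [hall θ hθ, hall _ (Set.Ioo_subset_Icc_self hm)]
  · have hm : θ₁ ∈ Set.Ioo 0 Real.pi := by
      refine ⟨lt_of_le_of_ne hθ₁.1 ?_, lt_of_le_of_ne hθ₁.2 ?_⟩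
      · rintro rfl
        exact hz h0
      · rintro rfl
        exact hz hπ
    have hloc : IsLocalMax (fun θ => v θ ^ 2) θ₁ :=
      hmax.isLocalMax (Icc_mem_nhds hm.1 hm.2)
    have := hloc.hasDerivAt_eq_zero ((h.hasDerivAt θ₁ hm).pow 2)
    refine ⟨θ₁, hm, ?_, hmax'⟩
    norm_num at this
    simpa using this

theorem IsTrigSturmSolution.eq_zero_of_critical {N t₁ w H θ₀ : ℝ} {v y G : ℝ → ℝ}
    (h : IsTrigSturmSolution N (N ^ 2 * t₁ * (t₁ + 2 * w))
      (N ^ 2 * (1 - t₁) * (1 - (t₁ + 2 * w))) H v y G)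
    (hw : 0 < w) (hv : ContinuousOn v (Set.Icc 0 Real.pi)) (h0 : v 0 = 0)
    (hθ : θ₀ ∈ Set.Ioo 0 Real.pi) (hc : v θ₀ * y θ₀ = 0) (ht : sinSqHalf θ₀ ≤ t₁) :
    v θ₀ = 0 := by
  have hmem : ∀ θ ∈ Set.Ioo 0 θ₀, ∀ x ∈ Set.Icc θ θ₀, x ∈ Set.Ioo 0 Real.pi :=
    fun θ hθ' x hx => ⟨hθ'.1.trans_le hx.1, hx.2.trans_lt hθ.2⟩
  have hvy : ∀ θ ∈ Set.Ioo 0 θ₀, v θ * y θ ≤ 0 := by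
    intro θ hθ'
    rw [← hc]
    refine le_of_hasDerivAt_nonneg (f := fun x => v x * y x) hθ'.2.le (fun x hx =>
      (h.hasDerivAt x (hmem θ hθ' x hx)).mul (h.hasDerivAt_deriv x (hmem θ hθ' x hx)))
      fun x hx => ?_
    have hx' := hmem θ hθ' x hx
    obtain ⟨q0, q1⟩ := sinSqHalf_mem_Ioo hx'
    have hle : sinSqHalf x ≤ t₁ := (strictMonoOn_sinSqHalf.monotoneOn
      (Set.Ioo_subset_Icc_self hx') (Set.Ioo_subset_Icc_self hθ) hx.2).trans ht
    rw [sturm_potential_eq q0 q1]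
    have : 0 ≤ N ^ 2 * (t₁ - sinSqHalf x) * (t₁ + 2 * w - sinSqHalf x) /
        (sinSqHalf x * (1 - sinSqHalf x)) * v x ^ 2 :=
      mul_nonneg (div_nonneg (mul_nonneg (mul_nonneg (sq_nonneg N) (by linarith)) (by linarith))
        (mul_nonneg q0.le (by linarith))) (sq_nonneg _)
    have e : y x * y x + v x * -(N ^ 2 * (sinSqHalf x - t₁) * (t₁ + 2 * w - sinSqHalf x) /
        (sinSqHalf x * (1 - sinSqHalf x)) * v x) = y x ^ 2 +
        N ^ 2 * (t₁ - sinSqHalf x) * (t₁ + 2 * w - sinSqHalf x) /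
        (sinSqHalf x * (1 - sinSqHalf x)) * v x ^ 2 := by ring
    rw [e]
    positivity
  have hanti : AntitoneOn (fun x => v x ^ 2) (Set.Icc 0 θ₀) := by
    refine antitoneOn_of_hasDerivWithinAt_nonpos (f' := fun x => 2 * (v x * y x))
      (convex_Icc 0 θ₀) ((hv.mono (Set.Icc_subset_Icc_right hθ.2.le)).pow 2)
      (fun x hx => ?_) (fun x hx => ?_)
    · rw [interior_Icc] at hx
      refine (((h.hasDerivAt x ⟨hx.1, hx.2.trans hθ.2⟩).pow 2).congr_deriv ?_).hasDerivWithinAt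
      norm_num
      ring
    · rw [interior_Icc] at hx
      linarith [hvy x hx]
  have := hanti (Set.left_mem_Icc.2 hθ.1.le) (Set.right_mem_Icc.2 hθ.1.le) hθ.1.le
  simp only [h0] at this
  nlinarith

theorem IsTrigSturmSolution.sq_le_of_potential_le {N A B H Φ θ₀ : ℝ} {v y G : ℝ → ℝ}
    (h : IsTrigSturmSolution N A B H v y G) (hΦ : 1 ≤ Φ)
    (hφ : ∀ θ ∈ Set.Ioo 0 Real.pi, N ^ 2 - A / sinSqHalf θ - B / (1 - sinSqHalf θ) ≤ Φ)
    (hθ : θ₀ ∈ Set.Ioo 0 Real.pi) (hc : v θ₀ * y θ₀ = 0)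
    (hmax : ∀ θ ∈ Set.Ioo 0 Real.pi, v θ ^ 2 ≤ v θ₀ ^ 2) (hhalf : θ₀ ≤ Real.pi / 2) :
    v θ₀ ^ 2 ≤ 3 / 2 * √Φ * H := by
  have hS : 1 ≤ √Φ := Real.one_le_sqrt.2 hΦ
  have hl : 1 / √Φ ≤ 1 := by
    rw [div_le_one (by linarith)]
    exact hS
  have hl0 : 0 < 1 / √Φ := by positivity
  have hl2 : Φ * (1 / √Φ) ^ 2 = 1 := by
    rw [div_pow, Real.sq_sqrt (by linarith)]
    field_simp
  set ℓ := 1 / √Φ with hℓ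
  have hmem : ∀ θ ∈ Set.Icc θ₀ (θ₀ + ℓ), ∀ x ∈ Set.Icc θ₀ θ, x ∈ Set.Ioo 0 Real.pi :=
    fun θ hθ' x hx => ⟨hθ.1.trans_le hx.1, by linarith [hx.2, hθ'.2, Real.pi_gt_three]⟩
  set M := v θ₀ ^ 2 with hM
  have f1 : ∀ θ ∈ Set.Icc θ₀ (θ₀ + ℓ), 0 ≤ 2 * (v θ * y θ) + Φ * M * (2 * (θ - θ₀)) := by
    intro θ hθ'
    have := le_of_hasDerivAt_nonneg
      (f := fun x => 2 * (v x * y x) + Φ * M * (2 * (x - θ₀))) hθ'.1 (fun x hx =>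
      (((h.hasDerivAt x (hmem θ hθ' x hx)).mul
        (h.hasDerivAt_deriv x (hmem θ hθ' x hx))).const_mul 2).add
        ((((hasDerivAt_id x).sub_const θ₀).const_mul 2).const_mul (Φ * M))) fun x hx => by
        have h1 := hφ x (hmem θ hθ' x hx)
        have h2 := hmax x (hmem θ hθ' x hx)
        generalize N ^ 2 - A / sinSqHalf x - B / (1 - sinSqHalf x) = φ at *
        have h3 : φ * v x ^ 2 ≤ Φ * M :=
          (mul_le_mul_of_nonneg_right h1 (sq_nonneg _)).trans
            (mul_le_mul_of_nonneg_left h2 (by linarith))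
        nlinarith [sq_nonneg (y x)]
    simpa [hc] using this
  have f2 : ∀ θ ∈ Set.Icc θ₀ (θ₀ + ℓ), M ≤ v θ ^ 2 + Φ * M * (θ - θ₀) ^ 2 := by
    intro θ hθ'
    have := le_of_hasDerivAt_nonneg
      (f := fun x => v x ^ 2 + Φ * M * (x - θ₀) ^ 2) hθ'.1 (fun x hx =>
      ((h.hasDerivAt x (hmem θ hθ' x hx)).pow 2).add
        ((((hasDerivAt_id x).sub_const θ₀).pow 2).const_mul (Φ * M))) fun x hx => by
        have := f1 x ⟨hx.1, hx.2.trans hθ'.2⟩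
        norm_num
        linarith
    simpa [← hM] using this
  have f3 := le_of_hasDerivAt_nonneg
      (f := fun x => G x - M * (x - θ₀) + Φ * M / 3 * (x - θ₀) ^ 3)
      (by linarith : θ₀ ≤ θ₀ + ℓ) (fun x hx =>
      ((h.hasDerivAt_mass x (hmem x hx x (Set.right_mem_Icc.2 hx.1))).sub
        (((hasDerivAt_id x).sub_const θ₀).const_mul M)).add
        ((((hasDerivAt_id x).sub_const θ₀).pow 3).const_mul (Φ * M / 3))) fun x hx => by
        have := f2 x hx
        norm_num
        linarith
  simp only [sub_self, add_sub_cancel_left, mul_zero, sub_zero] at f3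
  have hend : θ₀ + ℓ ∈ Set.Ioo 0 Real.pi :=
    hmem _ (Set.right_mem_Icc.2 (by linarith)) _ (Set.right_mem_Icc.2 (by linarith))
  have g0 := h.mass_nonneg _ hθ
  have g1 := h.mass_le _ hend
  norm_num at f3
  have : M * ℓ * (2 / 3) ≤ H := by
    have : Φ * M / 3 * ℓ ^ 3 = M * ℓ / 3 := by linear_combination (M * ℓ / 3) * hl2
    linarith
  rw [hℓ] at this
  have hS0 : 0 < √Φ := by linarith
  have e : M = 3 / 2 * √Φ * (M * (1 / √Φ) * (2 / 3)) := by field_simp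
  rw [e]
  exact mul_le_mul_of_nonneg_left this (by positivity)

theorem continuous_sinSqHalf : Continuous sinSqHalf := by
  unfold sinSqHalf
  fun_prop

theorem continuous_trigJacobi {a b : ℝ} (ha : 0 < a) (hb : 0 < b) (n : ℕ) :
    Continuous (trigJacobi a b n) := by
  have hs := continuous_sinSqHalf
  unfold trigJacobi
  refine ((hs.rpow_const fun θ => Or.inr (by positivity)).mul
    ((continuous_const.sub hs).rpow_const fun θ => Or.inr (by positivity))).mul
    ((continuous_unitJacobi a b n).comp hs)

theorem trigJacobi_zero {a b : ℝ} (ha : 0 < a) (n : ℕ) : trigJacobi a b n 0 = 0 := by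
  have : a / 2 + 1 / 4 ≠ 0 := by positivity
  rw [trigJacobi, show sinSqHalf 0 = 0 by simp [sinSqHalf], Real.zero_rpow this, zero_mul, zero_mul]

theorem trigJacobi_pi {a b : ℝ} (hb : 0 < b) (n : ℕ) : trigJacobi a b n Real.pi = 0 := by
  have : b / 2 + 1 / 4 ≠ 0 := by positivity
  rw [trigJacobi, show sinSqHalf Real.pi = 1 by simp [sinSqHalf], sub_self, Real.zero_rpow this,
    mul_zero, zero_mul]

theorem exists_critical_twelfth_power_le : ∃ C D : ℝ, 0 < C ∧
    ∀ (n a b N M H θ₀ : ℝ) (v y G : ℝ → ℝ), 1 ≤ n → 3 / 5 ≤ a → 3 / 5 ≤ b → a ≤ M → b ≤ M →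
      N = n + (a + b + 1) / 2 → D ≤ (n / 18) ^ 2 →
      IsTrigSturmSolution N ((a ^ 2 - 1 / 4) / 4) ((b ^ 2 - 1 / 4) / 4) H v y G →
      ContinuousOn v (Set.Icc 0 Real.pi) → v 0 = 0 → v Real.pi = 0 →
      θ₀ ∈ Set.Ioo 0 Real.pi → v θ₀ * y θ₀ = 0 →
      v θ₀ ^ 12 ≤ C * (M ^ 2 * (1 + M / n)) * H ^ 6 := by
  obtain ⟨C, D, hC, -, hedge⟩ := exists_twelfth_power_le (c := 1 / 10000) (by norm_num)
  have half : ∀ (n M N t₁ w H θ₀ : ℝ) (v y G : ℝ → ℝ), 1 ≤ n → 0 < M → 0 < N →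
      D ≤ (n / 18) ^ 2 → 0 < t₁ → 0 < w → t₁ + 2 * w < 1 →
      (1 / 10000 ≤ N ^ 2 * w * (t₁ * (1 - t₁)) ∧
        (n / 18) ^ 2 * ((t₁ + w) * (1 - (t₁ + w))) ^ 2 ≤ N ^ 2 * w ^ 4 ∧
        N ^ 2 * (t₁ * (1 - t₁)) / w ^ 2 ≤ 96 * (M ^ 2 * (1 + M / n))) →
      IsTrigSturmSolution N (N ^ 2 * t₁ * (t₁ + 2 * w))
        (N ^ 2 * (1 - t₁) * (1 - (t₁ + 2 * w))) H v y G →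
      ContinuousOn v (Set.Icc 0 Real.pi) → v 0 = 0 → θ₀ ∈ Set.Ioo 0 Real.pi →
      v θ₀ * y θ₀ = 0 → sinSqHalf θ₀ ≤ t₁ + w →
      v θ₀ ^ 12 ≤ 96 * C * (M ^ 2 * (1 + M / n)) * H ^ 6 := by
    intro n M N t₁ w H θ₀ v y G hn hM hN hD ht₁ hw h2 ⟨b1, b2, b3⟩ h hv h0 hθ hc hle
    have hH : 0 ≤ H := (h.mass_nonneg _ hθ).trans (h.mass_le _ hθ)
    rcases le_total (sinSqHalf θ₀) t₁ with ht | ht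
    · rw [h.eq_zero_of_critical hw hv h0 hθ hc ht, zero_pow (by norm_num)]
      positivity
    · refine (hedge N t₁ w H v y G hN ht₁ hw h2 h b1
        ((mul_le_mul_of_nonneg_right hD (sq_nonneg _)).trans b2) θ₀ hθ ht hle).trans ?_
      refine mul_le_mul_of_nonneg_right ?_ (by positivity)
      linarith [mul_le_mul_of_nonneg_left b3 hC.le]
  refine ⟨96 * C, D, by positivity, ?_⟩
  intro n a b N M H θ₀ v y G hn ha hb haM hbM hN hD h hv h0 hπ hθ hc
  have hN0 : 0 < N := by linarith
  have hM0 : 0 < M := by linarith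
  obtain ⟨t₁, w, ht₁, hw, h2, hA, hB, hd, hp, hp3, hq, hq3⟩ := turning_points_exist hn ha hb hN
  rcases le_total (sinSqHalf θ₀) (t₁ + w) with hle | hle
  · rw [← hA, ← hB] at h
    exact half n M N t₁ w H θ₀ v y G hn hM0 hN0 hD ht₁ hw h2
      (turning_points_bounds hn ha hb hN haM hbM ht₁ hw h2 hA hd hp hp3 hq hq3) h hv h0 hθ hc hle
  · have hr := h.reflect
    have e1 : 1 - (t₁ + 2 * w) + 2 * w = 1 - t₁ := by ring
    have e2 : 1 - (1 - (t₁ + 2 * w)) = t₁ + 2 * w := by ring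
    have e3 : 1 - (t₁ + 2 * w) + w = 1 - (t₁ + w) := by ring
    have e4 : 1 - (1 - (t₁ + w)) = t₁ + w := by ring
    have e5 : 1 - (1 - t₁) = t₁ := by ring
    have hA' : N ^ 2 * (1 - (t₁ + 2 * w)) * (1 - (t₁ + 2 * w) + 2 * w) = (b ^ 2 - 1 / 4) / 4 := by
      rw [e1, ← hB]
      ring
    have hB' : N ^ 2 * (1 - (1 - (t₁ + 2 * w))) * (1 - (1 - (t₁ + 2 * w) + 2 * w)) =
        (a ^ 2 - 1 / 4) / 4 := by
      rw [e1, e2, e5, ← hA]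
      ring
    rw [← hA', ← hB'] at hr
    have hb' := turning_points_bounds (t₁ := 1 - (t₁ + 2 * w)) hn hb ha
      (by linarith : N = n + (b + a + 1) / 2) hbM haM (by linarith) hw (by linarith) hA'
      (by linarith) (by rw [e3]; linarith) (by rw [e3]; linarith)
      (by rw [e3, e4]; linarith) (by rw [e3, e4]; linarith)
    have hm : Real.pi - θ₀ ∈ Set.Ioo 0 Real.pi := ⟨by linarith [hθ.2], by linarith [hθ.1]⟩
    have := half n M N (1 - (t₁ + 2 * w)) w H (Real.pi - θ₀) _ _ _ hn hM0 hN0 hD (by linarith) hw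
      (by linarith) hb' hr
      (hv.comp (continuous_const.sub continuous_id).continuousOn
        fun x hx => ⟨by simpa using hx.2, by simpa using hx.1⟩)
      (by simpa using hπ) hm (by simpa using hc) (by rw [sinSqHalf_reflect, e3]; linarith)
    simpa using this

theorem sturm_potential_le {n a b t : ℝ} (ha : 1 / 2 ≤ a) (hb : 1 / 2 ≤ b)
    (h0 : 0 < t) (h1 : t < 1) :
    (n + (a + b + 1) / 2) ^ 2 - (a ^ 2 - 1 / 4) / 4 / t - (b ^ 2 - 1 / 4) / 4 / (1 - t) ≤
      (n + 1) * (n + a + b) := by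
  have h1' : 0 < 1 - t := by linarith
  have e : (n + (a + b + 1) / 2) ^ 2 - (n + 1) * (n + a + b) = ((a + b - 1) / 2) ^ 2 := by ring
  have key : ((a + b - 1) / 2) ^ 2 ≤ (a ^ 2 - 1 / 4) / 4 / t + (b ^ 2 - 1 / 4) / 4 / (1 - t) := by
    have h : (a / 2 - 1 / 4 + (b / 2 - 1 / 4)) ^ 2 ≤
        (a / 2 - 1 / 4) ^ 2 / t + (b / 2 - 1 / 4) ^ 2 / (1 - t) := by
      rw [div_add_div _ _ h0.ne' h1'.ne', le_div_iff₀ (by positivity)]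
      nlinarith [sq_nonneg ((a / 2 - 1 / 4) * (1 - t) - (b / 2 - 1 / 4) * t)]
    have ha' : (a / 2 - 1 / 4) ^ 2 / t ≤ (a ^ 2 - 1 / 4) / 4 / t := by
      gcongr
      nlinarith
    have hb' : (b / 2 - 1 / 4) ^ 2 / (1 - t) ≤ (b ^ 2 - 1 / 4) / 4 / (1 - t) := by
      gcongr
      nlinarith
    linarith [show ((a + b - 1) / 2) ^ 2 = (a / 2 - 1 / 4 + (b / 2 - 1 / 4)) ^ 2 by ring]
  linarith

theorem IsTrigSturmSolution.critical_sq_le {n a b H θ₀ : ℝ} {v y G : ℝ → ℝ} (hn : 1 ≤ n)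
    (ha : 1 / 2 ≤ a) (hb : 1 / 2 ≤ b)
    (h : IsTrigSturmSolution (n + (a + b + 1) / 2) ((a ^ 2 - 1 / 4) / 4) ((b ^ 2 - 1 / 4) / 4)
      H v y G)
    (hθ : θ₀ ∈ Set.Ioo 0 Real.pi) (hc : v θ₀ * y θ₀ = 0)
    (hmax : ∀ θ ∈ Set.Ioo 0 Real.pi, v θ ^ 2 ≤ v θ₀ ^ 2) :
    v θ₀ ^ 2 ≤ 3 / 2 * √((n + 1) * (n + a + b)) * H := by
  have hΦ : 1 ≤ (n + 1) * (n + a + b) := by nlinarith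
  rcases le_total θ₀ (Real.pi / 2) with hh | hh
  · refine h.sq_le_of_potential_le hΦ (fun θ hθ => ?_) hθ hc hmax hh
    have := sinSqHalf_mem_Ioo hθ
    exact sturm_potential_le ha hb this.1 this.2
  · have hm : ∀ θ ∈ Set.Ioo 0 Real.pi, Real.pi - θ ∈ Set.Ioo 0 Real.pi :=
      fun θ hθ => ⟨by linarith [hθ.2], by linarith [hθ.1]⟩
    have := h.reflect.sq_le_of_potential_le hΦ (θ₀ := Real.pi - θ₀) (fun θ hθ => ?_) (hm _ hθ)
      (by simpa using hc) (fun θ hθ => by simpa using hmax _ (hm θ hθ)) (by linarith)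
    · simpa using this
    · have := sinSqHalf_mem_Ioo hθ
      have := sturm_potential_le (n := n) hb ha this.1 this.2
      rwa [add_comm b a, add_assoc n b a, add_comm b a, ← add_assoc n a b] at this

theorem exists_jacobi_sturm_twelfth_power_le : ∃ C : ℝ, 0 < C ∧
    ∀ (n a b M H : ℝ) (v y G : ℝ → ℝ), 1 ≤ n → 3 / 5 ≤ a → 3 / 5 ≤ b → a ≤ M → b ≤ M →
      IsTrigSturmSolution (n + (a + b + 1) / 2) ((a ^ 2 - 1 / 4) / 4) ((b ^ 2 - 1 / 4) / 4)
        H v y G →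
      ContinuousOn v (Set.Icc 0 Real.pi) → v 0 = 0 → v Real.pi = 0 →
      ∀ θ ∈ Set.Icc 0 Real.pi, v θ ^ 12 ≤ C * (M ^ 2 * (1 + M / n)) * H ^ 6 := by
  obtain ⟨C, D, hC, hcrit⟩ := exists_critical_twelfth_power_le
  set n₀ := 18 * (1 + |D|) with hn₀
  have hn₀1 : 1 ≤ n₀ := by
    rw [hn₀]
    linarith [abs_nonneg D]
  refine ⟨C + (3 / 2) ^ 6 * ((n₀ + 1) * (2 * n₀ + 2)) ^ 3 * n₀, by positivity, ?_⟩
  intro n a b M H v y G hn ha hb haM hbM h hv h0 hπ θ hθ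
  obtain ⟨θ₀, hm, hc, hmax⟩ := h.exists_critical_max hv h0 hπ
  have hH : 0 ≤ H := (h.mass_nonneg _ hm).trans (h.mass_le _ hm)
  have hM : 0 < M := by linarith
  have hle : v θ ^ 12 ≤ v θ₀ ^ 12 := by
    have := pow_le_pow_left₀ (sq_nonneg _) (hmax θ hθ) 6
    rwa [← pow_mul, ← pow_mul] at this
  refine hle.trans ?_
  rw [add_mul, add_mul]
  rcases le_total n₀ n with hnn | hnn
  · have hD : D ≤ (n / 18) ^ 2 := by
      have : 1 + |D| ≤ n / 18 := by linarith
      nlinarith [le_abs_self D, abs_nonneg D]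
    have := hcrit n a b _ M H θ₀ v y G hn ha hb haM hbM rfl hD h hv h0 hπ hm hc
    refine this.trans (le_add_of_nonneg_right (by positivity))
  · refine le_trans ?_ (le_add_of_nonneg_left (by positivity))
    have h2 := h.critical_sq_le hn (by linarith) (by linarith) hm hc
      fun θ hθ => hmax θ (Set.Ioo_subset_Icc_self hθ)
    have h12 := pow_le_pow_left₀ (sq_nonneg _) h2 6
    rw [← pow_mul, mul_pow, mul_pow, show √((n + 1) * (n + a + b)) ^ 6 =
      (√((n + 1) * (n + a + b)) ^ 2) ^ 3 by ring, Real.sq_sqrt (by positivity)] at h12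
    refine h12.trans (mul_le_mul_of_nonneg_right ?_ (by positivity))
    have hΦ : (n + 1) * (n + a + b) ≤ (n₀ + 1) * (2 * n₀ + 2) * M := by
      rw [mul_assoc]
      refine mul_le_mul (by linarith) ?_ (by linarith) (by linarith)
      nlinarith
    have hΦ3 := pow_le_pow_left₀ (by positivity) hΦ 3
    have hn0 : M ^ 3 ≤ n₀ * (M ^ 2 * (1 + M / n)) := by
      have : M ≤ n₀ * (M / n) := by
        rw [← mul_div_assoc, le_div_iff₀ (by linarith)]
        nlinarith
      nlinarith [sq_nonneg M, mul_le_mul_of_nonneg_left this (sq_nonneg M),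
        mul_nonneg (sq_nonneg M) (by linarith : 0 ≤ n₀)]
    calc (3 / 2 : ℝ) ^ 6 * ((n + 1) * (n + a + b)) ^ 3
        ≤ (3 / 2) ^ 6 * ((n₀ + 1) * (2 * n₀ + 2) * M) ^ 3 := by gcongr
      _ = (3 / 2) ^ 6 * ((n₀ + 1) * (2 * n₀ + 2)) ^ 3 * M ^ 3 := by ring
      _ ≤ (3 / 2) ^ 6 * ((n₀ + 1) * (2 * n₀ + 2)) ^ 3 * (n₀ * (M ^ 2 * (1 + M / n))) := by gcongr
      _ = _ := by ring

theorem stmt7 :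
    ∃ C : ℝ, 0 < C ∧
      ∀ (α β : ℝ), β ≤ α → (1 + Real.sqrt 2) / 4 ≤ β → ∀ (n : ℕ), 6 ≤ n →
        ∀ x ∈ Set.Icc (-1 : ℝ) 1,
          ((1 - x) / 2) ^ (α / 2 + 1 / 4) * ((1 + x) / 2) ^ (β / 2 + 1 / 4) * |jacobi α β n x|
            ≤ C * α ^ ((1 : ℝ) / 6) * (1 + α / (n : ℝ)) ^ ((1 : ℝ) / 12) *
                (Real.Gamma ((n : ℝ) + α + 1) * Real.Gamma ((n : ℝ) + β + 1) /
                    ((2 * (n : ℝ) + α + β + 1) * Real.Gamma ((n : ℝ) + 1) *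
                      Real.Gamma ((n : ℝ) + α + β + 1)))
                  ^ ((1 : ℝ) / 2) := by
  obtain ⟨C, hC, hbound⟩ := exists_jacobi_sturm_twelfth_power_le
  refine ⟨C ^ ((1 : ℝ) / 12), by positivity, fun α β hβα hβ n hn x hx => ?_⟩
  have hsqrt : (7 / 5 : ℝ) ≤ √2 := Real.le_sqrt_of_sq_le (by norm_num)
  have hβ' : 3 / 5 ≤ β := by linarith
  have hα0 : 0 < α := by linarith
  have hβ0 : 0 < β := by linarith
  have hn0 : (0 : ℝ) < n := by
    have : 0 < n := by omega
    exact_mod_cast this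
  obtain ⟨k, rfl⟩ : ∃ k, n = k + 1 := ⟨n - 1, by omega⟩
  obtain ⟨y, G, h⟩ := isTrigSturmSolution_trigJacobi hα0 hβ0 k
  have h1x : 0 ≤ (1 - x) / 2 := by linarith [hx.2]
  have h1x' : 0 ≤ (1 + x) / 2 := by linarith [hx.1]
  have hθ := sinSqHalf_arccos h1x (by linarith [hx.1] : (1 - x) / 2 ≤ 1)
  have key := hbound ((k + 1 : ℕ) : ℝ) α β α _ _ y G
    (by push_cast; linarith [(Nat.cast_nonneg k : (0 : ℝ) ≤ k)])
    (by linarith) hβ' le_rfl hβα h (continuous_trigJacobi hα0 hβ0 _).continuousOn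
    (trigJacobi_zero hα0 _) (trigJacobi_pi hβ0 _) (Real.arccos (1 - 2 * ((1 - x) / 2)))
    ⟨Real.arccos_nonneg _, Real.arccos_le_pi _⟩
  rw [trigJacobi, hθ, show 1 - (1 - x) / 2 = (1 + x) / 2 by ring, ← jacobi_eq_unitJacobi] at key
  have hH := unitJacobiNormSq_pos hα0 hβ0 (k + 1)
  change _ ≤ _ * unitJacobiNormSq α β (k + 1) ^ ((1 : ℝ) / 2)
  generalize unitJacobiNormSq α β (k + 1) = H at *
  generalize ((k + 1 : ℕ) : ℝ) = m at *
  have hq : 0 < 1 + α / m := by positivity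
  refine le_of_pow_le_pow_left₀ (n := 12) (by norm_num) (by positivity) ?_
  have habs : (((1 - x) / 2) ^ (α / 2 + 1 / 4) * ((1 + x) / 2) ^ (β / 2 + 1 / 4) *
      |jacobi α β (k + 1) x|) ^ 12 = (((1 - x) / 2) ^ (α / 2 + 1 / 4) *
      ((1 + x) / 2) ^ (β / 2 + 1 / 4) * jacobi α β (k + 1) x) ^ 12 := by
    rw [mul_pow, mul_pow _ (jacobi α β (k + 1) x), Even.pow_abs (by decide)]
  rw [habs]
  refine key.trans_eq ?_
  rw [mul_pow, mul_pow, mul_pow, ← Real.rpow_natCast (C ^ _), ← Real.rpow_mul hC.le,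
    ← Real.rpow_natCast (α ^ _), ← Real.rpow_mul hα0.le, ← Real.rpow_natCast ((1 + α / m) ^ _),
    ← Real.rpow_mul hq.le, ← Real.rpow_natCast (H ^ _), ← Real.rpow_mul hH.le]
  rw [show (1 : ℝ) / 12 * ((12 : ℕ) : ℝ) = 1 by norm_num,
    show (1 : ℝ) / 6 * ((12 : ℕ) : ℝ) = ((2 : ℕ) : ℝ) by norm_num,
    show (1 : ℝ) / 2 * ((12 : ℕ) : ℝ) = ((6 : ℕ) : ℝ) by norm_num, Real.rpow_natCast,
    Real.rpow_natCast, Real.rpow_one, Real.rpow_one]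
  ring
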